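/- arXiv:2605.25078 — 12 statements merged into one kernel-verified Lean document; each statement's English description precedes it below -/
import Mathlib

section
/- For all x₁, x₂ ∈ (0,1] and ρ₁, ρ₂ ∈ (0,1) with ρ₁ + ρ₂ < 1, the correlation function satisfies Ψ(x₁,x₂;ρ₁,ρ₂) ≤ binom(ρ₁(1/x₁−1) + ρ₂(1/x₂−1), ρ₁(1/x₁−1))⁻¹, where binom denotes the generalized binomial coefficient. -/
open MeasureTheory Real

noncomputable def betaFn (a b : ℝ) : ℝ := Real.Gamma a * Real.Gamma b / Real.Gamma (a + b)

noncomputable def incBeta (z a b : ℝ) : ℝ := ∫ t in (0:ℝ)..z, t ^ (a - 1) * (1 - t) ^ (b - 1)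

noncomputable def regIncBeta (z a b : ℝ) : ℝ := incBeta z a b / betaFn a b

noncomputable def mvBeta (ρ₁ ρ₂ ρ₀ : ℝ) : ℝ :=
  Real.Gamma ρ₁ * Real.Gamma ρ₂ * Real.Gamma ρ₀ / Real.Gamma (ρ₁ + ρ₂ + ρ₀)

noncomputable def genBinom (x y : ℝ) : ℝ :=
  Real.Gamma (x + 1) / (Real.Gamma (y + 1) * Real.Gamma (x - y + 1))

noncomputable def Psi (x₁ x₂ ρ₁ ρ₂ : ℝ) : ℝ :=
  (x₁ * x₂)⁻¹ * (mvBeta ρ₁ ρ₂ (1 - ρ₁ - ρ₂))⁻¹ *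
    ∫ p in {p : ℝ × ℝ | 0 ≤ p.1 ∧ 0 ≤ p.2 ∧ p.1 + p.2 ≤ 1},
      regIncBeta p.1 ρ₁ (1 - ρ₁) ^ (1 / x₁ - 1) *
        regIncBeta p.2 ρ₂ (1 - ρ₂) ^ (1 / x₂ - 1) *
        p.1 ^ (ρ₁ - 1) * p.2 ^ (ρ₂ - 1) * (1 - p.1 - p.2) ^ (-ρ₁ - ρ₂)

open Set

noncomputable def bd (a b t : ℝ) : ℝ := t ^ (a - 1) * (1 - t) ^ (b - 1)

lemma bd_nonneg (a b : ℝ) {t : ℝ} (ht : t ∈ Ioo (0:ℝ) 1) : 0 ≤ bd a b t :=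
  mul_nonneg (Real.rpow_nonneg ht.1.le _) (Real.rpow_nonneg (by linarith [ht.2]) _)

lemma bd_continuousOn (a b : ℝ) : ContinuousOn (bd a b) (Ioo 0 1) := by
  unfold bd
  refine ContinuousOn.mul ?_ ?_
  · exact ContinuousOn.rpow_const continuousOn_id (fun x hx => Or.inl hx.1.ne')
  · exact ContinuousOn.rpow_const (by fun_prop) (fun x hx => Or.inl (by linarith [hx.2]))

lemma bd_cpow (a b : ℝ) {x : ℝ} (hx : x ∈ Ioc (0:ℝ) 1) :
    (x : ℂ) ^ ((a:ℂ) - 1) * (1 - (x : ℂ)) ^ ((b:ℂ) - 1) = ((bd a b x : ℝ) : ℂ) := by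
  unfold bd
  push_cast
  rw [Complex.ofReal_cpow hx.1.le, Complex.ofReal_cpow (by linarith [hx.2])]
  push_cast
  rfl

lemma bd_intervalIntegrable {a b : ℝ} (ha : 0 < a) (hb : 0 < b) :
    IntervalIntegrable (bd a b) volume 0 1 := by
  have h := Complex.betaIntegral_convergent (u := a) (v := b) (by simpa) (by simpa)
  rw [intervalIntegrable_iff_integrableOn_Ioc_of_le zero_le_one] at h ⊢
  have h2 : IntegrableOn (fun x => ((bd a b x : ℝ) : ℂ)) (Ioc 0 1) :=
    h.congr_fun (fun x hx => bd_cpow a b hx) measurableSet_Ioc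
  have h3 := Integrable.re h2
  simp only [RCLike.re_to_complex, Complex.ofReal_re] at h3
  exact h3

lemma bd_integrableOn {a b : ℝ} (ha : 0 < a) (hb : 0 < b) :
    IntegrableOn (bd a b) (Ioo 0 1) :=
  ((intervalIntegrable_iff_integrableOn_Ioc_of_le zero_le_one).1
    (bd_intervalIntegrable ha hb)).mono_set Ioo_subset_Ioc_self

lemma bd_intervalIntegral {a b : ℝ} (ha : 0 < a) (hb : 0 < b) :
    ∫ t in (0:ℝ)..1, bd a b t = betaFn a b := by
  have h := ProbabilityTheory.beta_eq_betaIntegralReal a b ha hb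
  have h2 : Complex.betaIntegral a b = ((∫ t in (0:ℝ)..1, bd a b t : ℝ) : ℂ) := by
    rw [Complex.betaIntegral, ← intervalIntegral.integral_ofReal,
      intervalIntegral.integral_of_le zero_le_one, intervalIntegral.integral_of_le zero_le_one]
    exact setIntegral_congr_fun measurableSet_Ioc (fun x hx => bd_cpow a b hx)
  rw [h2, Complex.ofReal_re] at h
  exact h.symm

lemma bd_integral {a b : ℝ} (ha : 0 < a) (hb : 0 < b) :
    ∫ t in Ioo (0:ℝ) 1, bd a b t = betaFn a b := by
  rw [← integral_Ioc_eq_integral_Ioo, ← intervalIntegral.integral_of_le zero_le_one,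
    bd_intervalIntegral ha hb]

/-- bounded continuous on the open interval -/
def Good (f : ℝ → ℝ) : Prop :=
  ContinuousOn f (Ioo 0 1) ∧ ∀ x ∈ Ioo (0:ℝ) 1, 0 ≤ f x ∧ f x ≤ 1

lemma Good.integrable {f : ℝ → ℝ} (hf : Good f) {a b : ℝ} (ha : 0 < a) (hb : 0 < b) :
    IntegrableOn (fun t => f t * bd a b t) (Ioo 0 1) := by
  refine Integrable.bdd_mul (c := 1) (bd_integrableOn ha hb)
    (hf.1.aestronglyMeasurable measurableSet_Ioo) ?_
  refine ae_restrict_of_forall_mem measurableSet_Ioo (fun x hx => ?_)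
  rw [Real.norm_of_nonneg (hf.2 x hx).1]
  exact (hf.2 x hx).2

lemma one_sub_mul_mem {t s : ℝ} (ht : t ∈ Ioo (0:ℝ) 1) (hs : s ∈ Ioo (0:ℝ) 1) :
    (1 - t) * s ∈ Ioo (0:ℝ) 1 := by
  have h1 := ht.1
  have h2 := ht.2
  have h3 := hs.1
  have h4 := hs.2
  exact ⟨mul_pos (by linarith) h3, by nlinarith⟩

def simp2 : Set (ℝ × ℝ) := {p : ℝ × ℝ | 0 < p.1 ∧ 0 < p.2 ∧ p.1 + p.2 < 1}

noncomputable def Jint (ρ₁ ρ₂ : ℝ) (f g : ℝ → ℝ) : ℝ :=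
  ∫ p in simp2, f p.1 * g p.2 * p.1 ^ (ρ₁ - 1) * p.2 ^ (ρ₂ - 1) * (1 - p.1 - p.2) ^ (-ρ₁ - ρ₂)

noncomputable def shearD (p : ℝ × ℝ) : ℝ × ℝ →L[ℝ] ℝ × ℝ :=
  (Matrix.toLin (.finTwoProd ℝ) (.finTwoProd ℝ)
    !![1, 0; -p.2, 1 - p.1]).toContinuousLinearMap

lemma hasFDerivAt_shear (p : ℝ × ℝ) :
    HasFDerivAt (fun q : ℝ × ℝ => (q.1, (1 - q.1) * q.2)) (shearD p) p := by
  unfold shearD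
  rw [Matrix.toLin_finTwoProd_toContinuousLinearMap]
  have h1 : HasFDerivAt (fun q : ℝ × ℝ => q.1) (ContinuousLinearMap.fst ℝ ℝ ℝ) p := hasFDerivAt_fst
  have h2 : HasFDerivAt (fun q : ℝ × ℝ => q.2) (ContinuousLinearMap.snd ℝ ℝ ℝ) p := hasFDerivAt_snd
  convert! h1.prodMk ((h1.const_sub 1).mul h2) using 2
  · simp
  · ext <;> simp

lemma det_shearD (p : ℝ × ℝ) : (shearD p).det = 1 - p.1 := by
  unfold shearD
  simp

lemma shear_image : (fun q : ℝ × ℝ => (q.1, (1 - q.1) * q.2)) '' (Ioo 0 1 ×ˢ Ioo 0 1) = simp2 := by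
  ext ⟨x, y⟩
  constructor
  · rintro ⟨⟨t, s⟩, ⟨⟨h1, h2⟩, h3, h4⟩, h⟩
    simp only [Prod.mk.injEq] at h h1 h2 h3 h4
    obtain ⟨rfl, rfl⟩ := h
    refine ⟨h1, mul_pos (by linarith) h3, ?_⟩
    show t + (1 - t) * s < 1
    nlinarith
  · rintro ⟨h1, h2, h3⟩
    simp only at h1 h2 h3
    have hx : 0 < 1 - x := by linarith
    refine ⟨(x, y / (1 - x)), ⟨⟨h1, by simp only; linarith⟩, by simp only; positivity, ?_⟩, ?_⟩
    · show y / (1 - x) < 1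
      rw [div_lt_one hx]; linarith
    · simp only [Prod.mk.injEq, true_and]
      field_simp

lemma shear_injOn : InjOn (fun q : ℝ × ℝ => (q.1, (1 - q.1) * q.2)) (Ioo 0 1 ×ˢ Ioo 0 1) := by
  rintro ⟨t, s⟩ ⟨⟨h1, h2⟩, h3, h4⟩ ⟨t', s'⟩ _ h
  simp only [Prod.mk.injEq] at h h2
  obtain ⟨rfl, h⟩ := h
  have : (1 - t) ≠ 0 := by linarith
  have := mul_left_cancel₀ this h
  rw [this]

lemma density_shear {ρ₁ ρ₂ t s : ℝ} (ht : t ∈ Ioo (0:ℝ) 1) (hs : s ∈ Ioo (0:ℝ) 1) :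
    |1 - t| * (t ^ (ρ₁ - 1) * ((1 - t) * s) ^ (ρ₂ - 1) * (1 - t - (1 - t) * s) ^ (-ρ₁ - ρ₂)) =
      bd ρ₁ (1 - ρ₁) t * bd ρ₂ (1 - ρ₁ - ρ₂) s := by
  have h1 : 0 < 1 - t := by linarith [ht.2]
  have h2 : 0 < 1 - s := by linarith [hs.2]
  rw [abs_of_pos h1, show 1 - t - (1 - t) * s = (1 - t) * (1 - s) by ring,
    Real.mul_rpow h1.le hs.1.le, Real.mul_rpow h1.le h2.le]
  have h3 : (1 - t) ^ (1 - ρ₁ - 1) = (1 - t) * (1 - t) ^ (ρ₂ - 1) * (1 - t) ^ (-ρ₁ - ρ₂) := by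
    rw [show 1 - ρ₁ - 1 = 1 + (ρ₂ - 1) + (-ρ₁ - ρ₂) by ring, Real.rpow_add h1,
      Real.rpow_add h1, Real.rpow_one]
  unfold bd
  rw [h3, show 1 - ρ₁ - ρ₂ - 1 = -ρ₁ - ρ₂ by ring]
  ring

lemma prod_integrable {ρ₁ ρ₂ : ℝ} (h₁ : 0 < ρ₁) (h₂ : 0 < ρ₂) (hs : ρ₁ + ρ₂ < 1) {f g : ℝ → ℝ}
    (hf : Good f) (hg : Good g) :
    IntegrableOn (fun p : ℝ × ℝ => (f p.1 * g ((1 - p.1) * p.2)) *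
      (bd ρ₁ (1 - ρ₁) p.1 * bd ρ₂ (1 - ρ₁ - ρ₂) p.2)) (Ioo 0 1 ×ˢ Ioo 0 1)
      (volume.prod volume) := by
  have hm : MeasurableSet (Ioo (0:ℝ) 1 ×ˢ Ioo (0:ℝ) 1) := measurableSet_Ioo.prod measurableSet_Ioo
  refine Integrable.bdd_mul (c := 1) ?_ (ContinuousOn.aestronglyMeasurable ?_ hm) ?_
  · rw [← Measure.prod_restrict]
    exact Integrable.mul_prod (bd_integrableOn h₁ (by linarith))
      (bd_integrableOn h₂ (by linarith))
  · refine ContinuousOn.mul (hf.1.comp continuousOn_fst (fun p hp => hp.1)) ?_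
    exact hg.1.comp (by fun_prop) (fun p hp => one_sub_mul_mem hp.1 hp.2)
  · refine ae_restrict_of_forall_mem hm (fun p hp => ?_)
    have h3 := hf.2 _ hp.1
    have h4 := hg.2 _ (one_sub_mul_mem hp.1 hp.2)
    rw [Real.norm_of_nonneg (mul_nonneg h3.1 h4.1)]
    exact mul_le_one₀ h3.2 h4.1 h4.2

noncomputable def phi (ρ₁ ρ₂ : ℝ) (g : ℝ → ℝ) (t : ℝ) : ℝ :=
  ∫ s in Ioo (0:ℝ) 1, g ((1 - t) * s) * bd ρ₂ (1 - ρ₁ - ρ₂) s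

lemma J_eq {ρ₁ ρ₂ : ℝ} (h₁ : 0 < ρ₁) (h₂ : 0 < ρ₂) (hs : ρ₁ + ρ₂ < 1) {f g : ℝ → ℝ}
    (hf : Good f) (hg : Good g) :
    IntegrableOn (fun t => f t * bd ρ₁ (1 - ρ₁) t * phi ρ₁ ρ₂ g t) (Ioo 0 1) ∧
    Jint ρ₁ ρ₂ f g = ∫ t in Ioo (0:ℝ) 1, f t * bd ρ₁ (1 - ρ₁) t * phi ρ₁ ρ₂ g t := by
  have hm : MeasurableSet (Ioo (0:ℝ) 1 ×ˢ Ioo (0:ℝ) 1) := measurableSet_Ioo.prod measurableSet_Ioo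
  have hi := prod_integrable h₁ h₂ hs hf hg
  have hinner : ∀ t, ∫ s in Ioo (0:ℝ) 1, (f t * g ((1 - t) * s)) *
      (bd ρ₁ (1 - ρ₁) t * bd ρ₂ (1 - ρ₁ - ρ₂) s) =
      f t * bd ρ₁ (1 - ρ₁) t * phi ρ₁ ρ₂ g t := by
    intro t
    rw [phi, ← integral_const_mul]
    congr 1; ext s; ring
  constructor
  · have h := hi
    rw [IntegrableOn, ← Measure.prod_restrict] at h
    have := h.integral_prod_left
    simp only [hinner] at this
    exact this
  · rw [Jint, ← shear_image, integral_image_eq_integral_abs_det_fderiv_smul volume hm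
      (fun p _ => (hasFDerivAt_shear p).hasFDerivWithinAt) shear_injOn]
    rw [show (∫ t in Ioo (0:ℝ) 1, f t * bd ρ₁ (1 - ρ₁) t * phi ρ₁ ρ₂ g t) =
      ∫ t in Ioo (0:ℝ) 1, ∫ s in Ioo (0:ℝ) 1, (f t * g ((1 - t) * s)) *
      (bd ρ₁ (1 - ρ₁) t * bd ρ₂ (1 - ρ₁ - ρ₂) s) by simp only [hinner]]
    rw [← setIntegral_prod _ hi]
    refine setIntegral_congr_fun hm (fun p hp => ?_)
    simp only [det_shearD, smul_eq_mul]
    rw [← density_shear hp.1 hp.2]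
    ring

lemma J_swap (ρ₁ ρ₂ : ℝ) (f g : ℝ → ℝ) : Jint ρ₁ ρ₂ f g = Jint ρ₂ ρ₁ g f := by
  unfold Jint
  have hmp : MeasurePreserving (Prod.swap : ℝ × ℝ → ℝ × ℝ) volume volume :=
    Measure.measurePreserving_swap
  rw [← hmp.setIntegral_preimage_emb MeasurableEquiv.prodComm.measurableEmbedding]
  have : Prod.swap ⁻¹' simp2 = simp2 := by
    ext ⟨x, y⟩
    simp only [simp2, mem_preimage, Prod.swap_prod_mk, mem_ofPred_eq]
    constructor <;> rintro ⟨a, b, c⟩ <;> exact ⟨b, a, by linarith⟩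
  rw [this]
  congr 1; ext p
  simp only [Prod.fst_swap, Prod.snd_swap]
  rw [show 1 - p.2 - p.1 = 1 - p.1 - p.2 by ring, show -ρ₁ - ρ₂ = -ρ₂ - ρ₁ by ring]
  ring

lemma cheb {S : Set ℝ} (hS : MeasurableSet S) {F G φ : ℝ → ℝ}
    (hF : IntegrableOn F S) (hG : IntegrableOn G S)
    (hFφ : IntegrableOn (fun t => F t * φ t) S) (hGφ : IntegrableOn (fun t => G t * φ t) S)
    (h : ∀ x ∈ S, ∀ y ∈ S, (F x * G y - F y * G x) * (φ x - φ y) ≤ 0) :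
    (∫ t in S, F t * φ t) * (∫ t in S, G t) ≤ (∫ t in S, F t) * ∫ t in S, G t * φ t := by
  set μ := volume.restrict S
  have i1 : Integrable (fun p : ℝ × ℝ => (F p.1 * φ p.1) * G p.2) (μ.prod μ) := hFφ.mul_prod hG
  have i2 : Integrable (fun p : ℝ × ℝ => F p.1 * (G p.2 * φ p.2)) (μ.prod μ) := hF.mul_prod hGφ
  have i3 : Integrable (fun p : ℝ × ℝ => (G p.1 * φ p.1) * F p.2) (μ.prod μ) := hGφ.mul_prod hF
  have i4 : Integrable (fun p : ℝ × ℝ => G p.1 * (F p.2 * φ p.2)) (μ.prod μ) := hG.mul_prod hFφ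
  have e1 := integral_prod_mul (μ := μ) (ν := μ) (fun t => F t * φ t) G
  have e2 := integral_prod_mul (μ := μ) (ν := μ) F (fun t => G t * φ t)
  have e3 := integral_prod_mul (μ := μ) (ν := μ) (fun t => G t * φ t) F
  have e4 := integral_prod_mul (μ := μ) (ν := μ) G (fun t => F t * φ t)
  have i14 : Integrable (fun p : ℝ × ℝ => (F p.1 * φ p.1) * G p.2 + G p.1 * (F p.2 * φ p.2))
    (μ.prod μ) := i1.add i4
  have i23 : Integrable (fun p : ℝ × ℝ => F p.1 * (G p.2 * φ p.2) + (G p.1 * φ p.1) * F p.2)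
    (μ.prod μ) := i2.add i3
  have key : ∫ p : ℝ × ℝ, ((F p.1 * φ p.1) * G p.2 + G p.1 * (F p.2 * φ p.2)) ∂(μ.prod μ) ≤
      ∫ p : ℝ × ℝ, (F p.1 * (G p.2 * φ p.2) + (G p.1 * φ p.1) * F p.2) ∂(μ.prod μ) := by
    refine integral_mono_ae i14 i23 ?_
    rw [Measure.prod_restrict]
    refine ae_restrict_of_forall_mem (hS.prod hS) (fun p hp => ?_)
    have := h p.1 hp.1 p.2 hp.2
    simp only
    nlinarith
  rw [integral_add i1 i4, integral_add i2 i3, e1, e2, e3, e4] at key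
  linarith

lemma Good.comp_mul {g : ℝ → ℝ} (hg : Good g) {t : ℝ} (ht : t ∈ Ioo (0:ℝ) 1) :
    Good (fun s => g ((1 - t) * s)) :=
  ⟨hg.1.comp (by fun_prop) (fun s hs => one_sub_mul_mem ht hs),
    fun s hs => hg.2 _ (one_sub_mul_mem ht hs)⟩

lemma phi_anti {ρ₁ ρ₂ : ℝ} (h₂ : 0 < ρ₂) (hs : ρ₁ + ρ₂ < 1) {g : ℝ → ℝ}
    (hg : Good g) (hmono : MonotoneOn g (Ioo 0 1)) : AntitoneOn (phi ρ₁ ρ₂ g) (Ioo 0 1) := by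
  intro x hx y hy hxy
  refine setIntegral_mono_on ((hg.comp_mul hy).integrable h₂ (by linarith))
    ((hg.comp_mul hx).integrable h₂ (by linarith)) measurableSet_Ioo (fun s hs' => ?_)
  refine mul_le_mul_of_nonneg_right ?_ (bd_nonneg _ _ hs')
  refine hmono (one_sub_mul_mem hy hs') (one_sub_mul_mem hx hs') ?_
  exact mul_le_mul_of_nonneg_right (by linarith) hs'.1.le

lemma key_ineq {ρ₁ ρ₂ : ℝ} (h₁ : 0 < ρ₁) (h₂ : 0 < ρ₂) (hs : ρ₁ + ρ₂ < 1) {f g k : ℝ → ℝ}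
    (hf : Good f) (hg : Good g) (hk : Good k) (hmono : MonotoneOn k (Ioo 0 1))
    (hfg : ∀ x ∈ Ioo (0:ℝ) 1, ∀ y ∈ Ioo (0:ℝ) 1, x ≤ y → f x * g y ≤ f y * g x) :
    Jint ρ₁ ρ₂ f k * (∫ t in Ioo (0:ℝ) 1, g t * bd ρ₁ (1 - ρ₁) t) ≤
      (∫ t in Ioo (0:ℝ) 1, f t * bd ρ₁ (1 - ρ₁) t) * Jint ρ₁ ρ₂ g k := by
  obtain ⟨i1, e1⟩ := J_eq h₁ h₂ hs hf hk
  obtain ⟨i2, e2⟩ := J_eq h₁ h₂ hs hg hk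
  rw [e1, e2]
  refine cheb measurableSet_Ioo (hf.integrable h₁ (by linarith)) (hg.integrable h₁ (by linarith))
    i1 i2 ?_
  have hanti := phi_anti (ρ₁ := ρ₁) h₂ hs hk hmono
  intro x hx y hy
  have hb : 0 ≤ bd ρ₁ (1 - ρ₁) x * bd ρ₁ (1 - ρ₁) y :=
    mul_nonneg (bd_nonneg _ _ hx) (bd_nonneg _ _ hy)
  rw [show f x * bd ρ₁ (1 - ρ₁) x * (g y * bd ρ₁ (1 - ρ₁) y) -
      f y * bd ρ₁ (1 - ρ₁) y * (g x * bd ρ₁ (1 - ρ₁) x) =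
      (f x * g y - f y * g x) * (bd ρ₁ (1 - ρ₁) x * bd ρ₁ (1 - ρ₁) y) by ring]
  rcases le_total x y with hxy | hxy
  · have a1 := hfg x hx y hy hxy
    have a2 := hanti hx hy hxy
    exact mul_nonpos_of_nonpos_of_nonneg (mul_nonpos_of_nonpos_of_nonneg (by linarith) hb)
      (by linarith)
  · have a1 := hfg y hy x hx hxy
    have a2 := hanti hy hx hxy
    exact mul_nonpos_of_nonneg_of_nonpos (mul_nonneg (by linarith) hb) (by linarith)

lemma good_pow {α : ℝ} (hα : 0 ≤ α) : Good (fun t => t ^ α) :=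
  ⟨ContinuousOn.rpow_const continuousOn_id (fun x hx => Or.inl hx.1.ne'),
    fun x hx => ⟨Real.rpow_nonneg hx.1.le _, Real.rpow_le_one hx.1.le hx.2.le hα⟩⟩

lemma mono_pow {α : ℝ} (hα : 0 ≤ α) : MonotoneOn (fun t : ℝ => t ^ α) (Ioo 0 1) :=
  fun _ hx _ _ hxy => Real.rpow_le_rpow hx.1.le hxy hα

lemma pow_mul_bd (a b α : ℝ) {t : ℝ} (ht : t ∈ Ioo (0:ℝ) 1) :
    t ^ α * bd a b t = bd (a + α) b t := by
  unfold bd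
  rw [← mul_assoc, ← Real.rpow_add ht.1]
  congr 2; ring

lemma m_pow {a b α : ℝ} (ha : 0 < a) (hb : 0 < b) (hα : 0 ≤ α) :
    ∫ t in Ioo (0:ℝ) 1, t ^ α * bd a b t = betaFn (a + α) b := by
  rw [← bd_integral (by linarith) hb]
  exact setIntegral_congr_fun measurableSet_Ioo (fun t ht => pow_mul_bd a b α ht)

lemma J_pow {ρ₁ ρ₂ α β : ℝ} (h₁ : 0 < ρ₁) (h₂ : 0 < ρ₂) (hs : ρ₁ + ρ₂ < 1)
    (hα : 0 ≤ α) (hβ : 0 ≤ β) :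
    Jint ρ₁ ρ₂ (fun t => t ^ α) (fun t => t ^ β) =
      betaFn (ρ₁ + α) (1 - ρ₁ + β) * betaFn (ρ₂ + β) (1 - ρ₁ - ρ₂) := by
  rw [(J_eq h₁ h₂ hs (good_pow hα) (good_pow hβ)).2]
  have hphi : ∀ t ∈ Ioo (0:ℝ) 1, phi ρ₁ ρ₂ (fun t => t ^ β) t =
      (1 - t) ^ β * betaFn (ρ₂ + β) (1 - ρ₁ - ρ₂) := by
    intro t ht
    rw [← m_pow h₂ (by linarith) hβ, ← integral_const_mul, phi]
    refine setIntegral_congr_fun measurableSet_Ioo (fun s hs => ?_)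
    rw [Real.mul_rpow (by linarith [ht.2]) hs.1.le]
    ring
  rw [← bd_integral (a := ρ₁ + α) (b := 1 - ρ₁ + β) (by linarith) (by linarith),
    ← integral_mul_const]
  refine setIntegral_congr_fun measurableSet_Ioo (fun t ht => ?_)
  rw [hphi t ht, pow_mul_bd _ _ _ ht]
  unfold bd
  rw [show 1 - ρ₁ + β - 1 = (1 - ρ₁ - 1) + β by ring, Real.rpow_add (by linarith [ht.2])]
  ring

/- Facts on the regularized incomplete Beta function -/

lemma betaFn_pos {a b : ℝ} (ha : 0 < a) (hb : 0 < b) : 0 < betaFn a b :=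
  ProbabilityTheory.beta_pos ha hb

lemma incBeta_eq (z a b : ℝ) : incBeta z a b = ∫ t in (0:ℝ)..z, bd a b t := rfl

lemma bd_ii {a b x y : ℝ} (ha : 0 < a) (hb : 0 < b) (hx : x ∈ Icc (0:ℝ) 1) (hy : y ∈ Icc (0:ℝ) 1) :
    IntervalIntegrable (bd a b) volume x y := by
  refine (bd_intervalIntegrable ha hb).mono_set ?_
  rw [uIcc_of_le zero_le_one]
  exact uIcc_subset_Icc hx hy

lemma incBeta_mono {a b : ℝ} (ha : 0 < a) (hb : 0 < b) :
    MonotoneOn (fun z => incBeta z a b) (Icc 0 1) := by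
  intro x hx y hy hxy
  simp only [incBeta_eq]
  rw [← sub_nonneg, intervalIntegral.integral_interval_sub_left
    (bd_ii ha hb ⟨le_rfl, zero_le_one⟩ hy) (bd_ii ha hb ⟨le_rfl, zero_le_one⟩ hx)]
  refine intervalIntegral.integral_nonneg hxy (fun t ht => ?_)
  exact mul_nonneg (Real.rpow_nonneg (hx.1.trans ht.1) _)
    (Real.rpow_nonneg (by linarith [ht.2, hy.2]) _)

lemma reg_mono {a b : ℝ} (ha : 0 < a) (hb : 0 < b) :
    MonotoneOn (fun z => regIncBeta z a b) (Icc 0 1) := fun _ hx _ hy hxy =>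
  div_le_div_of_nonneg_right (incBeta_mono ha hb hx hy hxy) (betaFn_pos ha hb).le

lemma reg_zero (a b : ℝ) : regIncBeta 0 a b = 0 := by simp [regIncBeta, incBeta]

lemma reg_one {a b : ℝ} (ha : 0 < a) (hb : 0 < b) : regIncBeta 1 a b = 1 := by
  rw [regIncBeta, incBeta_eq, bd_intervalIntegral ha hb, div_self (betaFn_pos ha hb).ne']

lemma reg_mem {a b : ℝ} (ha : 0 < a) (hb : 0 < b) {x : ℝ} (hx : x ∈ Icc (0:ℝ) 1) :
    0 ≤ regIncBeta x a b ∧ regIncBeta x a b ≤ 1 := by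
  constructor
  · rw [← reg_zero a b]
    exact reg_mono ha hb ⟨le_rfl, zero_le_one⟩ hx hx.1
  · rw [← reg_one ha hb]
    exact reg_mono ha hb hx ⟨zero_le_one, le_rfl⟩ hx.2

lemma reg_cont {a b : ℝ} (ha : 0 < a) (hb : 0 < b) :
    ContinuousOn (fun z => regIncBeta z a b) (Icc 0 1) := by
  have h := bd_intervalIntegrable ha hb
  have h2 := intervalIntegral.continuousOn_primitive_interval (f := bd a b) (μ := volume)
    (a := 0) (b := 1) ?_
  · rw [uIcc_of_le zero_le_one] at h2
    exact h2.div_const _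
  · rw [uIcc_of_le zero_le_one]
    rwa [intervalIntegrable_iff_integrableOn_Icc_of_le zero_le_one] at h

lemma good_reg {a b α : ℝ} (ha : 0 < a) (hb : 0 < b) (hα : 0 ≤ α) :
    Good (fun z => regIncBeta z a b ^ α) := by
  constructor
  · exact ((reg_cont ha hb).mono Ioo_subset_Icc_self).rpow_const (fun _ _ => Or.inr hα)
  · intro x hx
    have := reg_mem ha hb (Ioo_subset_Icc_self hx)
    exact ⟨Real.rpow_nonneg this.1 _, Real.rpow_le_one this.1 this.2 hα⟩

lemma mono_reg {a b α : ℝ} (ha : 0 < a) (hb : 0 < b) (hα : 0 ≤ α) :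
    MonotoneOn (fun z => regIncBeta z a b ^ α) (Ioo 0 1) := fun _ hx _ hy hxy =>
  Real.rpow_le_rpow (reg_mem ha hb (Ioo_subset_Icc_self hx)).1
    (reg_mono ha hb (Ioo_subset_Icc_self hx) (Ioo_subset_Icc_self hy) hxy) hα

lemma m_reg {a b α : ℝ} (ha : 0 < a) (hb : 0 < b) (hα : 0 ≤ α) :
    ∫ t in Ioo (0:ℝ) 1, regIncBeta t a b ^ α * bd a b t = betaFn a b / (α + 1) := by
  have hB := betaFn_pos ha hb
  have hc : ContinuousOn (fun z => betaFn a b / (α + 1) * regIncBeta z a b ^ (α + 1)) (Icc 0 1) :=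
    continuousOn_const.mul ((reg_cont ha hb).rpow_const (fun _ _ => Or.inr (by linarith)))
  have hd : ∀ x ∈ Ioo (0:ℝ) 1, HasDerivAt
      (fun z => betaFn a b / (α + 1) * regIncBeta z a b ^ (α + 1))
      (regIncBeta x a b ^ α * bd a b x) x := by
    intro x hx
    have h1 : HasDerivAt (fun z => incBeta z a b) (bd a b x) x := by
      refine intervalIntegral.integral_hasDerivAt_right
        (bd_ii ha hb ⟨le_rfl, zero_le_one⟩ (Ioo_subset_Icc_self hx)) ?_ ?_
      · exact (bd_continuousOn a b).stronglyMeasurableAtFilter isOpen_Ioo x hx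
      · exact (bd_continuousOn a b).continuousAt (isOpen_Ioo.mem_nhds hx)
    have h2 : HasDerivAt (fun z => regIncBeta z a b) (bd a b x / betaFn a b) x :=
      h1.div_const _
    have h3 := (h2.rpow_const (p := α + 1) (Or.inr (by linarith))).const_mul (betaFn a b / (α + 1))
    convert! h3 using 1
    rw [add_sub_cancel_right]
    field_simp
  have hi : IntervalIntegrable (fun t => regIncBeta t a b ^ α * bd a b t) volume 0 1 := by
    rw [intervalIntegrable_iff_integrableOn_Ioo_of_le zero_le_one]
    exact (good_reg ha hb hα).integrable ha hb
  have h := intervalIntegral.integral_eq_sub_of_hasDerivAt_of_le zero_le_one hc hd hi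
  rw [← integral_Ioc_eq_integral_Ioo, ← intervalIntegral.integral_of_le zero_le_one, h,
    reg_one ha hb, reg_zero, Real.zero_rpow (by linarith), Real.one_rpow]
  ring

lemma inc_ratio {ρ x y : ℝ} (h : ρ ∈ Ioo (0:ℝ) 1) (hx : x ∈ Ioo (0:ℝ) 1) (hy : y ∈ Ioo (0:ℝ) 1)
    (hxy : x ≤ y) : incBeta x ρ (1 - ρ) * y ^ ρ ≤ incBeta y ρ (1 - ρ) * x ^ ρ := by
  have hx0 := hx.1
  have hy0 := hy.1
  set c := x / y with hc
  have hc0 : 0 < c := by positivity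
  have hc1 : c ≤ 1 := by rw [hc, div_le_one hy0]; exact hxy
  have hcy : c * y = x := by rw [hc]; field_simp
  have e : incBeta x ρ (1 - ρ) = c * ∫ t in (0:ℝ)..y, bd ρ (1 - ρ) (c * t) := by
    rw [intervalIntegral.integral_comp_mul_left _ hc0.ne', hcy, mul_zero, smul_eq_mul,
      ← mul_assoc, mul_inv_cancel₀ hc0.ne', one_mul, incBeta_eq]
  have hint : IntervalIntegrable (bd ρ (1 - ρ)) volume 0 x :=
    bd_ii h.1 (by linarith [h.2]) ⟨le_rfl, zero_le_one⟩ (Ioo_subset_Icc_self hx)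
  have hint2 : IntervalIntegrable (fun t => bd ρ (1 - ρ) (c * t)) volume 0 y := by
    have := hint.comp_mul_left (c := c)
    simpa [hc, hx0.ne', hy0.ne'] using this
  have le1 : (∫ t in (0:ℝ)..y, bd ρ (1 - ρ) (c * t)) ≤
      ∫ t in (0:ℝ)..y, c ^ (ρ - 1) * bd ρ (1 - ρ) t := by
    refine intervalIntegral.integral_mono_on_of_le_Ioo hy0.le hint2
      ((bd_ii h.1 (by linarith [h.2]) ⟨le_rfl, zero_le_one⟩ (Ioo_subset_Icc_self hy)).const_mul _) ?_
    intro t ht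
    have ht0 := ht.1
    have ht1 : t < 1 := ht.2.trans hy.2
    unfold bd
    rw [Real.mul_rpow hc0.le ht0.le, ← mul_assoc]
    refine mul_le_mul_of_nonneg_left ?_ (by positivity)
    refine Real.rpow_le_rpow_of_nonpos (by linarith) ?_ (by linarith [h.1])
    nlinarith
  rw [intervalIntegral.integral_const_mul, ← incBeta_eq] at le1
  have hcp : c * c ^ (ρ - 1) = c ^ ρ := by
    rw [Real.rpow_sub_one hc0.ne']; field_simp
  have hxp : x ^ ρ = c ^ ρ * y ^ ρ := by
    rw [← Real.mul_rpow hc0.le hy0.le, hcy]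
  have hyp : 0 ≤ y ^ ρ := by positivity
  calc incBeta x ρ (1 - ρ) * y ^ ρ
      ≤ (c * (c ^ (ρ - 1) * incBeta y ρ (1 - ρ))) * y ^ ρ := by rw [e]; gcongr
    _ = incBeta y ρ (1 - ρ) * x ^ ρ := by rw [hxp, ← hcp]; ring

lemma reg_ratio {ρ a x y : ℝ} (h : ρ ∈ Ioo (0:ℝ) 1) (ha : 0 ≤ a) (hx : x ∈ Ioo (0:ℝ) 1)
    (hy : y ∈ Ioo (0:ℝ) 1) (hxy : x ≤ y) :
    regIncBeta x ρ (1 - ρ) ^ a * y ^ (ρ * a) ≤ regIncBeta y ρ (1 - ρ) ^ a * x ^ (ρ * a) := by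
  have hx0 := hx.1
  have hy0 := hy.1
  have hb : 0 < 1 - ρ := by linarith [h.2]
  have r1 := (reg_mem h.1 hb (Ioo_subset_Icc_self hx)).1
  have r2 := (reg_mem h.1 hb (Ioo_subset_Icc_self hy)).1
  rw [Real.rpow_mul hx0.le, Real.rpow_mul hy0.le, ← Real.mul_rpow r1 (by positivity),
    ← Real.mul_rpow r2 (by positivity)]
  refine Real.rpow_le_rpow (by positivity) ?_ ha
  have := inc_ratio h hx hy hxy
  unfold regIncBeta
  rw [div_mul_eq_mul_div, div_mul_eq_mul_div]
  exact div_le_div_of_nonneg_right this (betaFn_pos h.1 hb).le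

lemma Psi_eq (x₁ x₂ ρ₁ ρ₂ : ℝ) (h₁ : ρ₁ ∈ Ioo (0:ℝ) 1) (h₂ : ρ₂ ∈ Ioo (0:ℝ) 1) :
    Psi x₁ x₂ ρ₁ ρ₂ = (x₁ * x₂)⁻¹ * (mvBeta ρ₁ ρ₂ (1 - ρ₁ - ρ₂))⁻¹ *
      Jint ρ₁ ρ₂ (fun t => regIncBeta t ρ₁ (1 - ρ₁) ^ (1 / x₁ - 1))
        (fun t => regIncBeta t ρ₂ (1 - ρ₂) ^ (1 / x₂ - 1)) := by
  unfold Psi Jint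
  congr 1
  refine setIntegral_eq_of_subset_of_forall_sdiff_eq_zero ?_ ?_ ?_
  · refine (measurableSet_le measurable_const measurable_fst).inter
      ((measurableSet_le measurable_const measurable_snd).inter
      (measurableSet_le (measurable_fst.add measurable_snd) measurable_const))
  · rintro p ⟨a, b, c⟩
    exact ⟨a.le, b.le, c.le⟩
  · rintro p ⟨⟨a, b, c⟩, hn⟩
    rcases a.eq_or_lt with ha | ha
    · rw [← ha, Real.zero_rpow (by linarith [h₁.2])]; ring
    rcases b.eq_or_lt with hb | hb
    · rw [← hb, Real.zero_rpow (by linarith [h₂.2])]; ring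
    rcases c.eq_or_lt with hc | hc
    · rw [show 1 - p.1 - p.2 = 0 by linarith, Real.zero_rpow (by linarith [h₂.1, h₁.1])]; ring
    exact absurd ⟨ha, hb, hc⟩ hn

theorem psi_le_inv_genBinom (x₁ x₂ ρ₁ ρ₂ : ℝ)
    (hx₁ : x₁ ∈ Set.Ioc (0:ℝ) 1) (hx₂ : x₂ ∈ Set.Ioc (0:ℝ) 1)
    (hρ₁ : ρ₁ ∈ Set.Ioo (0:ℝ) 1) (hρ₂ : ρ₂ ∈ Set.Ioo (0:ℝ) 1)
    (hsum : ρ₁ + ρ₂ < 1) :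
    Psi x₁ x₂ ρ₁ ρ₂ ≤
      (genBinom (ρ₁ * (1 / x₁ - 1) + ρ₂ * (1 / x₂ - 1)) (ρ₁ * (1 / x₁ - 1)))⁻¹ := by
  have p1 := hρ₁.1
  have p2 := hρ₂.1
  have q1 : 0 < 1 - ρ₁ := by linarith
  have q2 : 0 < 1 - ρ₂ := by linarith
  have q0 : 0 < 1 - ρ₁ - ρ₂ := by linarith
  have y1 := hx₁.1
  have y2 := hx₂.1
  rw [Psi_eq x₁ x₂ ρ₁ ρ₂ hρ₁ hρ₂]
  have ha1 : 0 ≤ 1 / x₁ - 1 := by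
    have := one_le_one_div hx₁.1 hx₁.2
    linarith
  have ha2 : 0 ≤ 1 / x₂ - 1 := by
    have := one_le_one_div hx₂.1 hx₂.2
    linarith
  have m1 := m_reg p1 q1 ha1
  have m2 := m_reg p2 q2 ha2
  rw [sub_add_cancel, div_div_eq_mul_div, div_one] at m1 m2
  generalize 1 / x₁ - 1 = a₁ at *
  generalize 1 / x₂ - 1 = a₂ at *
  have hα : 0 ≤ ρ₁ * a₁ := by positivity
  have hβ : 0 ≤ ρ₂ * a₂ := by positivity
  have k1 := key_ineq p1 p2 hsum (good_reg p1 q1 ha1) (good_pow hα) (good_reg p2 q2 ha2)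
    (mono_reg p2 q2 ha2) (fun x hx y hy hxy => reg_ratio hρ₁ ha1 hx hy hxy)
  have k2 := key_ineq p2 p1 (by linarith) (good_reg p2 q2 ha2) (good_pow hβ) (good_pow hα)
    (mono_pow hα) (fun x hx y hy hxy => reg_ratio hρ₂ ha2 hx hy hxy)
  rw [J_swap ρ₂ ρ₁, J_swap ρ₂ ρ₁, m2, m_pow p2 q2 hβ, J_pow p1 p2 hsum hα hβ] at k2
  rw [m1, m_pow p1 q1 hα] at k1
  generalize Jint ρ₁ ρ₂ (fun t => t ^ (ρ₁ * a₁)) (fun t => regIncBeta t ρ₂ (1 - ρ₂) ^ a₂) = J2 at *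
  generalize Jint ρ₁ ρ₂ (fun t => regIncBeta t ρ₁ (1 - ρ₁) ^ a₁)
    (fun t => regIncBeta t ρ₂ (1 - ρ₂) ^ a₂) = J1 at *
  generalize ρ₁ * a₁ = α at *
  generalize ρ₂ * a₂ = β at *
  have B1 := betaFn_pos (a := ρ₁ + α) (b := 1 - ρ₁) (by linarith) q1
  have B2 := betaFn_pos (a := ρ₂ + β) (b := 1 - ρ₂) (by linarith) q2
  rw [← le_div_iff₀ B1] at k1
  rw [← le_div_iff₀ B2] at k2
  have hB := betaFn_pos p1 q1
  have J1le : J1 ≤ betaFn ρ₁ (1 - ρ₁) * x₁ * (betaFn ρ₂ (1 - ρ₂) * x₂ *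
      (betaFn (ρ₁ + α) (1 - ρ₁ + β) * betaFn (ρ₂ + β) (1 - ρ₁ - ρ₂)) / betaFn (ρ₂ + β) (1 - ρ₂)) /
      betaFn (ρ₁ + α) (1 - ρ₁) := by
    refine k1.trans ?_
    gcongr
  have g1 := Real.Gamma_pos_of_pos p1
  have g2 := Real.Gamma_pos_of_pos p2
  have g3 := Real.Gamma_pos_of_pos q1
  have g4 := Real.Gamma_pos_of_pos q2
  have g5 := Real.Gamma_pos_of_pos q0
  have g6 := Real.Gamma_pos_of_pos (show 0 < ρ₁ + α by linarith)
  have g7 := Real.Gamma_pos_of_pos (show 0 < ρ₂ + β by linarith)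
  have g8 := Real.Gamma_pos_of_pos (show 0 < α + 1 by linarith)
  have g9 := Real.Gamma_pos_of_pos (show 0 < β + 1 by linarith)
  have g10 := Real.Gamma_pos_of_pos (show 0 < α + β + 1 by linarith)
  have g11 := Real.Gamma_pos_of_pos (show 0 < 1 - ρ₁ + β by linarith)
  have hM : 0 < mvBeta ρ₁ ρ₂ (1 - ρ₁ - ρ₂) := by
    unfold mvBeta
    rw [show ρ₁ + ρ₂ + (1 - ρ₁ - ρ₂) = 1 by ring, Real.Gamma_one]
    positivity
  refine (mul_le_mul_of_nonneg_left J1le (by positivity)).trans (le_of_eq ?_)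
  unfold mvBeta betaFn genBinom
  rw [show ρ₁ + ρ₂ + (1 - ρ₁ - ρ₂) = 1 by ring, show ρ₁ + (1 - ρ₁) = 1 by ring,
    show ρ₂ + (1 - ρ₂) = 1 by ring, show ρ₁ + α + (1 - ρ₁ + β) = α + β + 1 by ring,
    show ρ₂ + β + (1 - ρ₁ - ρ₂) = 1 - ρ₁ + β by ring, show ρ₂ + β + (1 - ρ₂) = β + 1 by ring,
    show ρ₁ + α + (1 - ρ₁) = α + 1 by ring, show α + β - α + 1 = β + 1 by ring, Real.Gamma_one]
  field_simp
end

section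
/- For all nonnegative reals a ≤ a' and b, and all natural numbers j₁, j₂, the generalized binomial coefficient satisfies binom(a + b + j₁ + j₂, a + j₁) ≤ binom(a' + b + j₁ + j₂, a' + j₁). (Equivalently, the coefficient α_{j₁,j₂} = binom(ρ₁q₁ + ρ₂q₂ + j₁ + j₂, ρ₁q₁ + j₁)⁻¹ is monotone nonincreasing in ρ₁ and ρ₂.) -/
theorem Gamma_mul_le_aux (x c d : ℝ) (hx : 0 < x) (hc : 0 ≤ c) (hd : 0 ≤ d) :
    Real.Gamma (x + c) * Real.Gamma (x + d) ≤ Real.Gamma x * Real.Gamma (x + c + d) := by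
  rcases hc.eq_or_lt with rfl | hc
  · simp
  have hs : 0 < c + d := by positivity
  have p1 := Real.Gamma_pos_of_pos hx
  have p2 : 0 < Real.Gamma (x + c) := Real.Gamma_pos_of_pos (by positivity)
  have p3 : 0 < Real.Gamma (x + d) := Real.Gamma_pos_of_pos (by positivity)
  have p4 : 0 < Real.Gamma (x + c + d) := Real.Gamma_pos_of_pos (by positivity)
  have hz : x + c + d ∈ Set.Ioi (0 : ℝ) := by
    simp only [Set.mem_Ioi]; positivity
  have hsum : d / (c + d) + c / (c + d) = 1 := by field_simp; ring
  have h1 := Real.convexOn_log_Gamma.2 (Set.mem_Ioi.2 hx) hz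
    (show 0 ≤ d / (c + d) by positivity) (show 0 ≤ c / (c + d) by positivity) hsum
  have h2 := Real.convexOn_log_Gamma.2 (Set.mem_Ioi.2 hx) hz
    (show 0 ≤ c / (c + d) by positivity) (show 0 ≤ d / (c + d) by positivity) (by linarith)
  have e1 : d / (c + d) * x + c / (c + d) * (x + c + d) = x + c := by field_simp; ring
  have e2 : c / (c + d) * x + d / (c + d) * (x + c + d) = x + d := by field_simp; ring
  simp only [smul_eq_mul, Function.comp, e1, e2] at h1 h2
  rw [← Real.log_le_log_iff (by positivity) (by positivity), Real.log_mul p2.ne' p3.ne',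
    Real.log_mul p1.ne' p4.ne']
  have e3 : d / (c + d) = 1 - c / (c + d) := by linarith
  rw [e3] at h1 h2
  linarith

theorem genBinom_mono (a a' b : ℝ) (ha : 0 ≤ a) (haa' : a ≤ a') (hb : 0 ≤ b)
    (j₁ j₂ : ℕ) :
    genBinom (a + b + j₁ + j₂) (a + j₁) ≤ genBinom (a' + b + j₁ + j₂) (a' + j₁) := by
  have ha' : 0 ≤ a' := ha.trans haa'
  have h := Gamma_mul_le_aux (a + j₁ + 1) (b + j₂) (a' - a) (by positivity) (by positivity)
    (by linarith)
  have p1 : 0 < Real.Gamma (a + j₁ + 1) := Real.Gamma_pos_of_pos (by positivity)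
  have p2 : 0 < Real.Gamma (a' + j₁ + 1) := Real.Gamma_pos_of_pos (by positivity)
  have p3 : 0 < Real.Gamma (b + j₂ + 1) := Real.Gamma_pos_of_pos (by positivity)
  have e1 : a + j₁ + 1 + (b + j₂) = a + b + j₁ + j₂ + 1 := by ring
  have e2 : a + j₁ + 1 + (a' - a) = a' + j₁ + 1 := by ring
  have e3 : a + b + j₁ + j₂ + 1 + (a' - a) = a' + b + j₁ + j₂ + 1 := by ring
  rw [e1, e2, e3] at h
  have e4 : a + b + j₁ + j₂ - (a + j₁) + 1 = b + j₂ + 1 := by ring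
  have e5 : a' + b + j₁ + j₂ - (a' + j₁) + 1 = b + j₂ + 1 := by ring
  unfold genBinom
  rw [e4, e5, div_le_div_iff₀ (by positivity) (by positivity)]
  have := mul_le_mul_of_nonneg_right h p3.le
  linarith
end

section
/- For any fixed x ∈ (0,1] and natural number j ≥ 0, the function ρ ↦ (ρ/(jx+ρ)) · binom(ρ/x + j, ρ) is monotone nondecreasing on (0,1), where binom denotes the generalized binomial coefficient. -/
theorem kfm_diff {y : ℝ} (hy : 0 < y) :
    DifferentiableAt ℝ (fun t => Real.log (Real.Gamma t)) y := by
  refine DifferentiableAt.log (Real.differentiableAt_Gamma fun m => ?_) (Real.Gamma_pos_of_pos hy).ne'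
  have : (0:ℝ) ≤ m := m.cast_nonneg
  linarith

theorem kfm_mono {y z : ℝ} (hy : 0 < y) (hyz : y ≤ z) :
    deriv (fun t => Real.log (Real.Gamma t)) y ≤ deriv (fun t => Real.log (Real.Gamma t)) z := by
  have h : ConvexOn ℝ (Set.Ioi 0) (fun t => Real.log (Real.Gamma t)) := Real.convexOn_log_Gamma
  exact h.monotoneOn_deriv (fun t ht => kfm_diff ht) hy (lt_of_lt_of_le hy hyz) hyz

theorem kfm_rec {y : ℝ} (hy : 0 < y) :
    deriv (fun t => Real.log (Real.Gamma t)) (y + 1)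
      = deriv (fun t => Real.log (Real.Gamma t)) y + 1 / y := by
  have h1 := ((kfm_diff hy).hasDerivAt).add (Real.hasDerivAt_log hy.ne')
  have h2 : HasDerivAt (fun t => Real.log (Real.Gamma (t + 1)))
      (deriv (fun t => Real.log (Real.Gamma t)) (y + 1)) y :=
    HasDerivAt.comp_add_const (f := fun t => Real.log (Real.Gamma t)) y 1
      (kfm_diff (by linarith)).hasDerivAt
  have h3 := h1.congr_of_eventuallyEq (f₁ := fun t => Real.log (Real.Gamma (t + 1))) (by
    filter_upwards [lt_mem_nhds hy] with t ht
    rw [Real.Gamma_add_one ht.ne', Real.log_mul ht.ne' (Real.Gamma_pos_of_pos ht).ne']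
    simp [add_comm])
  rw [h2.unique h3, one_div]

theorem kfm_ineq {a r : ℝ} (ha : 1 ≤ a) (hr : 0 < r) (hr1 : r < 1) (j : ℕ) (G : ℝ → ℝ)
    (hm : ∀ y z, 0 < y → y ≤ z → G y ≤ G z) (hrec : ∀ y, 0 < y → G (y + 1) = G y + 1 / y) :
    0 ≤ a * G (a * r + j) - G r - (a - 1) * G ((a - 1) * r + j + 1) := by
  have har : r ≤ a * r := by nlinarith
  have h1 := hrec r hr
  rcases Nat.eq_zero_or_pos j with rfl | hj
  · have h2 := hrec (a * r) (by linarith)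
    have h3 := hm (r + 1) (a * r + 1) (by linarith) (by linarith)
    have h4 := hm ((a - 1) * r + 1) (a * r + 1) (by nlinarith) (by linarith)
    have h5 : a * (1 / (a * r)) = 1 / r := by
      have : a ≠ 0 := by linarith
      field_simp
    have h6 := mul_le_mul_of_nonneg_left h4 (sub_nonneg.2 ha)
    have h7 : a * G (a * r + 1) = a * G (a * r) + 1 / r := by rw [h2, mul_add, h5]
    simp only [Nat.cast_zero, add_zero]
    linarith
  · have hj' : (1:ℝ) ≤ j := by exact_mod_cast hj
    have h2 := hrec (a * r + j) (by linarith)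
    have h3 := hm (r + 1) (a * r + j) (by linarith) (by linarith)
    have h4 := hm ((a - 1) * r + j + 1) (a * r + j + 1) (by nlinarith) (by linarith)
    have h5 : (a - 1) * (1 / (a * r + j)) ≤ 1 / r := by
      rw [mul_one_div, div_le_div_iff₀ (by linarith) hr]
      linarith
    have h6 := mul_le_mul_of_nonneg_left h4 (sub_nonneg.2 ha)
    rw [h2, mul_add] at h6
    linarith

theorem kfm_log {a : ℝ} (ha : 1 ≤ a) (j : ℕ) :
    MonotoneOn (fun r : ℝ => Real.log (Real.Gamma (a * r + j)) - Real.log (Real.Gamma r)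
      - Real.log (Real.Gamma ((a - 1) * r + j + 1))) (Set.Ioo 0 1) := by
  have hd : ∀ r ∈ Set.Ioo (0:ℝ) 1, HasDerivAt
      (fun r : ℝ => Real.log (Real.Gamma (a * r + j)) - Real.log (Real.Gamma r)
      - Real.log (Real.Gamma ((a - 1) * r + j + 1)))
      (a * deriv (fun t => Real.log (Real.Gamma t)) (a * r + j)
        - deriv (fun t => Real.log (Real.Gamma t)) r
        - (a - 1) * deriv (fun t => Real.log (Real.Gamma t)) ((a - 1) * r + j + 1)) r := by
    intro r hr
    have hj : (0:ℝ) ≤ j := j.cast_nonneg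
    have har : r ≤ a * r := by nlinarith [hr.1]
    have hr0 := hr.1
    have e1 : HasDerivAt (fun r : ℝ => a * r + j) a r := by
      simpa using ((hasDerivAt_id r).const_mul a).add_const (j:ℝ)
    have e2 : HasDerivAt (fun r : ℝ => (a - 1) * r + j + 1) (a - 1) r := by
      simpa using (((hasDerivAt_id r).const_mul (a - 1)).add_const (j:ℝ)).add_const (1:ℝ)
    have d1 := HasDerivAt.comp (h₂ := fun t => Real.log (Real.Gamma t)) r
      (kfm_diff (y := a * r + j) (by linarith)).hasDerivAt e1
    have d2 := HasDerivAt.comp (h₂ := fun t => Real.log (Real.Gamma t)) r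
      (kfm_diff (y := (a - 1) * r + j + 1) (by nlinarith)).hasDerivAt e2
    rw [mul_comm a, mul_comm (a - 1) (deriv _ _)]
    exact (d1.sub (kfm_diff hr0).hasDerivAt).sub d2
  refine monotoneOn_of_deriv_nonneg (convex_Ioo 0 1)
    (fun r hr => (hd r hr).continuousAt.continuousWithinAt) ?_ ?_
  · rw [interior_Ioo]
    exact fun r hr => (hd r hr).differentiableAt.differentiableWithinAt
  · rw [interior_Ioo]
    intro r hr
    rw [(hd r hr).deriv]
    exact kfm_ineq ha hr.1 hr.2 j _ (fun y z => kfm_mono) (fun y => kfm_rec)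

theorem kappa_factor_monotone (x : ℝ) (hx : x ∈ Set.Ioc (0:ℝ) 1) (j : ℕ) :
    MonotoneOn (fun ρ : ℝ => ρ / (j * x + ρ) * genBinom (ρ / x + j) ρ)
      (Set.Ioo 0 1) := by
  obtain ⟨hx0, hx1⟩ := hx
  have ha : 1 ≤ x⁻¹ := (one_le_inv₀ hx0).2 hx1
  have key : ∀ r ∈ Set.Ioo (0:ℝ) 1, r / (j * x + r) * genBinom (r / x + j) r
      = x⁻¹ * Real.exp (Real.log (Real.Gamma (x⁻¹ * r + j)) - Real.log (Real.Gamma r)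
      - Real.log (Real.Gamma ((x⁻¹ - 1) * r + j + 1))) := by
    intro r hr
    have hr0 := hr.1
    have hj : (0:ℝ) ≤ j := j.cast_nonneg
    have har : r ≤ x⁻¹ * r := by nlinarith
    have p1 : 0 < x⁻¹ * r + j := by linarith
    have p2 : 0 < (x⁻¹ - 1) * r + j + 1 := by nlinarith
    have g1 := Real.Gamma_pos_of_pos p1
    have g2 := Real.Gamma_pos_of_pos p2
    have g0 := Real.Gamma_pos_of_pos hr0
    rw [Real.exp_sub, Real.exp_sub, Real.exp_log g1, Real.exp_log g2, Real.exp_log g0]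
    unfold genBinom
    have e1 : r / x + j = x⁻¹ * r + j := by ring
    have e2 : x⁻¹ * r + j - r + 1 = (x⁻¹ - 1) * r + j + 1 := by ring
    have e3 : (j:ℝ) * x + r = x * (x⁻¹ * r + j) := by field_simp; ring
    rw [e1, e2, e3, Real.Gamma_add_one p1.ne', Real.Gamma_add_one hr0.ne']
    generalize Real.Gamma (x⁻¹ * r + j) = A at *
    generalize Real.Gamma ((x⁻¹ - 1) * r + j + 1) = B at *
    generalize x⁻¹ * r + j = C at *
    field_simp
  intro r hr s hs hrs
  simp only
  rw [key r hr, key s hs]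
  have := kfm_log ha j hr hs hrs
  simp only at this
  gcongr x⁻¹ * Real.exp ?_
end

section
/- Let f : ℝ → ℝ be infinitely differentiable on a neighborhood of 0 with f(0) = 1, and set a_k = f^(k)(0)/k! for k ≥ 0 and c_k = g^(k)(0)/k! for k ≥ 1, where g = log ∘ f. Suppose every a_k is positive and the sequence (a_k) is log-convex, i.e. a_k·a_{k−2} ≥ a_{k−1}² for all k ≥ 2. Then for every k ≥ 1: k·c_k ≥ a_k + (k−1)·(a_k/a_{k−1} − a_1)·c_{k−1} > 0. In particular, all derivatives of log f at 0 are positive, i.e. f is log-absolutely monotonic at 0. -/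
theorem aux_deriv_eq (f : ℝ → ℝ) (hf : ContDiffAt ℝ (⊤ : ℕ∞) f 0) (hf0 : f 0 = 1) :
    deriv f =ᶠ[nhds 0] (deriv (fun x => Real.log (f x)) * f) := by
  have h1 : ContDiffAt ℝ 1 f 0 := hf.of_le (by exact_mod_cast le_top)
  have h2 : ∀ᶠ y in nhds (0 : ℝ), ContDiffAt ℝ 1 f y := h1.eventually (by decide)
  have h3 : ∀ᶠ y in nhds (0 : ℝ), f y ≠ 0 :=
    hf.continuousAt.eventually_ne (by rw [hf0]; exact one_ne_zero)
  filter_upwards [h2, h3] with y hy hy0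
  have hd : DifferentiableAt ℝ f y := hy.differentiableAt (by simp)
  rw [Pi.mul_apply, (hd.hasDerivAt.log hy0).deriv]
  field_simp

theorem aux_rec (f : ℝ → ℝ) (hf : ContDiffAt ℝ (⊤ : ℕ∞) f 0) (hf0 : f 0 = 1)
    (a c : ℕ → ℝ)
    (ha : ∀ k : ℕ, a k = iteratedDeriv k f 0 / Nat.factorial k)
    (hc : ∀ k : ℕ, c k = iteratedDeriv k (fun x => Real.log (f x)) 0 / Nat.factorial k)
    (n : ℕ) : ((n : ℝ) + 1) * a (n + 1) =
      ∑ j ∈ Finset.range (n + 1), (((j : ℝ) + 1) * c (j + 1)) * a (n - j) := by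
  have hg : ContDiffAt ℝ (⊤ : ℕ∞) (fun x => Real.log (f x)) 0 :=
    hf.log (by rw [hf0]; exact one_ne_zero)
  have hg' : ContDiffAt ℝ n (deriv (fun x => Real.log (f x))) 0 :=
    hg.derivWithin (by exact_mod_cast le_top)
  have hfn : ContDiffAt ℝ n f 0 := hf.of_le (by exact_mod_cast le_top)
  rw [ha, iteratedDeriv_succ', (aux_deriv_eq f hf hf0).iteratedDeriv_eq n,
    iteratedDeriv_mul hg' hfn, Finset.sum_div, Finset.mul_sum]
  refine Finset.sum_congr rfl fun i hi => ?_
  have hi' : i ≤ n := by simpa [Nat.lt_succ_iff] using hi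
  rw [hc, ha, iteratedDeriv_succ', Nat.cast_choose ℝ hi', Nat.factorial_succ, Nat.factorial_succ]
  have := Nat.factorial_ne_zero n
  have := Nat.factorial_ne_zero i
  have := Nat.factorial_ne_zero (n - i)
  push_cast
  field_simp

theorem aux_step (a d : ℕ → ℝ) (hapos : ∀ k : ℕ, 0 < a k) (ha0 : a 0 = 1)
    (hratio : Monotone fun k => a (k + 1) / a k)
    (hrec : ∀ n : ℕ, ((n : ℝ) + 1) * a (n + 1) = ∑ j ∈ Finset.range (n + 1), d j * a (n - j))
    (n : ℕ) (hd : ∀ j ≤ n, 0 < d j) :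
    a (n + 2) + (a (n + 2) / a (n + 1) - a 1) * d n ≤ d (n + 1) ∧
    0 < a (n + 2) + (a (n + 2) / a (n + 1) - a 1) * d n := by
  set r := a (n + 2) / a (n + 1) with hr
  have hr1 : a 1 ≤ r := by
    have := hratio (Nat.zero_le (n + 1))
    simpa [ha0] using this
  have hra : r * a (n + 1) = a (n + 2) := div_mul_cancel₀ _ (hapos _).ne'
  have e1 := hrec n
  have e2 := hrec (n + 1)
  rw [Finset.sum_range_succ] at e1
  rw [Finset.sum_range_succ, Finset.sum_range_succ] at e2
  have hle : ∑ j ∈ Finset.range n, d j * a (n + 1 - j) ≤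
      r * ∑ j ∈ Finset.range n, d j * a (n - j) := by
    rw [Finset.mul_sum]
    refine Finset.sum_le_sum fun j hj => ?_
    have hj' : j < n := Finset.mem_range.1 hj
    have h1 : a (n - j + 1) / a (n - j) ≤ r := hratio (by omega : n - j ≤ n + 1)
    rw [div_le_iff₀ (hapos _)] at h1
    rw [show n + 1 - j = n - j + 1 by omega]
    nlinarith [hd j hj'.le]
  simp only [Nat.sub_self, ha0, mul_one, Nat.add_sub_cancel_left] at e1 e2
  push_cast at e2
  have e3 : r * (((n : ℝ) + 1) * a (n + 1)) = ((n : ℝ) + 1) * a (n + 2) := by rw [← hra]; ring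
  rw [e1] at e3
  refine ⟨?_, ?_⟩
  · have : n + 1 + 1 = n + 2 := rfl
    rw [this] at e2
    nlinarith
  · have := mul_nonneg (sub_nonneg.2 hr1) (hd n le_rfl).le
    linarith [hapos (n + 2)]

theorem log_abs_monotonic_criterion (f : ℝ → ℝ)
    (hf : ContDiffAt ℝ (⊤ : ℕ∞) f 0) (hf0 : f 0 = 1)
    (a c : ℕ → ℝ)
    (ha : ∀ k : ℕ, a k = iteratedDeriv k f 0 / Nat.factorial k)
    (hc : ∀ k : ℕ, c k = iteratedDeriv k (fun x => Real.log (f x)) 0 / Nat.factorial k)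
    (hapos : ∀ k : ℕ, 0 < a k)
    (hlogconvex : ∀ k : ℕ, 2 ≤ k → a (k - 1) ^ 2 ≤ a k * a (k - 2)) :
    ∀ k : ℕ, 1 ≤ k →
      (a k + (k - 1 : ℝ) * (a k / a (k - 1) - a 1) * c (k - 1) ≤ k * c k ∧
       0 < a k + (k - 1 : ℝ) * (a k / a (k - 1) - a 1) * c (k - 1) ∧
       0 < c k) := by
  have ha0 : a 0 = 1 := by simp [ha, hf0]
  have hratio : Monotone fun k => a (k + 1) / a k := by
    refine monotone_nat_of_le_succ fun k => ?_
    have := hlogconvex (k + 2) (by omega)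
    simp only [Nat.add_sub_cancel, show k + 2 - 1 = k + 1 by omega] at this
    rw [div_le_div_iff₀ (hapos _) (hapos _)]
    nlinarith
  have hrec := aux_rec f hf hf0 a c ha hc
  have hstep := aux_step a (fun j => ((j : ℝ) + 1) * c (j + 1)) hapos ha0 hratio hrec
  have hc1 : c 1 = a 1 := by
    have := hrec 0
    simp [ha0] at this
    exact this.symm
  have hd : ∀ j : ℕ, 0 < ((j : ℝ) + 1) * c (j + 1) := by
    intro j
    induction j using Nat.strong_induction_on with
    | _ j ih =>
      rcases j with _ | n
      · simpa [hc1] using hapos 1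
      · obtain ⟨h1, h2⟩ := hstep n fun j hj => ih j (by omega)
        exact h2.trans_le h1
  have hcpos : ∀ j : ℕ, 0 < c (j + 1) := fun j =>
    (mul_pos_iff_of_pos_left (by positivity)).1 (hd j)
  intro k hk
  rcases k with _ | _ | n
  · omega
  · simp [hc1, hapos 1]
  · obtain ⟨h1, h2⟩ := hstep n fun j _ => hd j
    have e : (((n + 1 + 1 : ℕ) : ℝ) - 1) = (n : ℝ) + 1 := by push_cast; ring
    have e' : n + 1 + 1 - 1 = n + 1 := rfl
    have e2 : a (n + 1 + 1) + ((n : ℝ) + 1) * (a (n + 1 + 1) / a (n + 1) - a 1) * c (n + 1) =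
      a (n + 2) + (a (n + 2) / a (n + 1) - a 1) * (((n : ℝ) + 1) * c (n + 1)) := by ring
    rw [e, e', e2]
    refine ⟨?_, h2, hcpos _⟩
    simpa using h1
end

section
/- Let f : ℝ → ℝ be infinitely differentiable on a neighborhood of 0 with f(0) > 0, and suppose all derivatives of g = log ∘ f at 0 are nonnegative (f is log-absolutely monotonic at 0). Then for any fixed real q ≥ 0, all derivatives of the function x ↦ f(x)^q at 0 are nonnegative. -/
theorem rpow_abs_monotonic (f : ℝ → ℝ)
    (hf : ContDiffAt ℝ (⊤ : ℕ∞) f 0) (hf0 : 0 < f 0)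
    (hlog : ∀ k : ℕ, 0 ≤ iteratedDeriv k (fun x => Real.log (f x)) 0)
    (q : ℝ) (hq : 0 ≤ q) :
    ∀ k : ℕ, 0 ≤ iteratedDeriv k (fun x => f x ^ q) 0 := by
  have hG : ContDiffAt ℝ (⊤ : ℕ∞) (fun x => f x ^ q) 0 := hf.rpow_const_of_ne hf0.ne'
  have hL : ContDiffAt ℝ (⊤ : ℕ∞) (fun x => Real.log (f x)) 0 := hf.log hf0.ne'
  have hL' : ContDiffAt ℝ (⊤ : ℕ∞) (deriv (fun x => Real.log (f x))) 0 := by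
    have h := (hL.fderiv_right (m := (⊤ : ℕ∞)) (by norm_cast)).clm_apply
      (contDiffAt_const (c := (1 : ℝ)))
    exact h
  have hev : deriv (fun x => f x ^ q) =ᶠ[nhds 0]
      (fun x => f x ^ q) * (fun x => q * deriv (fun x => Real.log (f x)) x) := by
    have h1 : ContDiffAt ℝ 1 f 0 := hf.of_le (by norm_cast)
    filter_upwards [h1.eventually (by simp), hf.continuousAt.eventually (lt_mem_nhds hf0)]
      with x hx hx0
    have hd : HasDerivAt f (deriv f x) x := (hx.differentiableAt (by simp)).hasDerivAt
    have e1 := (hd.rpow_const (p := q) (Or.inl hx0.ne')).deriv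
    have e2 := (hd.log hx0.ne').deriv
    simp only [Pi.mul_apply]
    rw [e1, e2, Real.rpow_sub_one hx0.ne']
    field_simp
  intro k
  induction k using Nat.strong_induction_on with
  | _ k ih =>
    cases k with
    | zero => simpa using Real.rpow_nonneg hf0.le q
    | succ n =>
      have hn : ((n : ℕ) : WithTop ℕ∞) ≤ ((⊤ : ℕ∞) : WithTop ℕ∞) := by
        exact_mod_cast le_top
      rw [iteratedDeriv_succ', hev.iteratedDeriv_eq,
        iteratedDeriv_mul (hG.of_le hn) ((contDiffAt_const.mul hL').of_le hn)]
      refine Finset.sum_nonneg fun i hi => ?_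
      rw [iteratedDeriv_const_mul_field, ← iteratedDeriv_succ']
      have := ih i (by simpa using hi)
      have := hlog (n - i + 1)
      positivity
end

section
/- Let ρ ∈ (0,1] and define a_i = ρ·Γ(ρ+i)/((ρ+i)·Γ(ρ)·Γ(i+1)) for integers i ≥ 0 (these are the Taylor coefficients of x ↦ ρ·B(x;ρ,1−ρ)/x^ρ at 0). Then for every integer i ≥ 2, the log-convexity condition a_i·a_{i−2} ≥ a_{i−1}² holds; explicitly, a_i·a_{i−2}/a_{i−1}² = (i−1)(i+ρ−1)³/(i·(i+ρ−2)²·(i+ρ)) ≥ 1. -/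
theorem beta_coeffs_log_convex (ρ : ℝ) (hρ : ρ ∈ Set.Ioc (0:ℝ) 1)
    (a : ℕ → ℝ)
    (ha : ∀ i : ℕ, a i = ρ * Real.Gamma (ρ + i) / ((ρ + i) * Real.Gamma ρ * Real.Gamma (i + 1))) :
    ∀ i : ℕ, 2 ≤ i →
      a i * a (i - 2) / a (i - 1) ^ 2
          = (i - 1 : ℝ) * (i + ρ - 1) ^ 3 / (i * (i + ρ - 2) ^ 2 * (i + ρ)) ∧
      a (i - 1) ^ 2 ≤ a i * a (i - 2) := by
  obtain ⟨h0, h1⟩ := hρ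
  have hR := Real.Gamma_pos_of_pos h0
  have hpos : ∀ n : ℕ, 0 < a n := by
    intro n
    have hn : (0:ℝ) ≤ n := n.cast_nonneg
    rw [ha]
    have := Real.Gamma_pos_of_pos (show 0 < ρ + n by positivity)
    have := Real.Gamma_pos_of_pos (show (0:ℝ) < n + 1 by positivity)
    positivity
  have hrec : ∀ n : ℕ, a (n + 1) = a n * ((ρ + n) ^ 2 / ((ρ + n + 1) * (n + 1))) := by
    intro n
    have hn : (0:ℝ) ≤ n := n.cast_nonneg
    have hG := Real.Gamma_pos_of_pos (show 0 < ρ + n by positivity)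
    have hF := Real.Gamma_pos_of_pos (show (0:ℝ) < n + 1 by positivity)
    have e1 : Real.Gamma (ρ + n + 1) = (ρ + n) * Real.Gamma (ρ + n) :=
      Real.Gamma_add_one (by positivity)
    have e2 : Real.Gamma ((n : ℝ) + 1 + 1) = (n + 1) * Real.Gamma (n + 1) :=
      Real.Gamma_add_one (by positivity)
    rw [ha, ha]
    push_cast
    rw [← add_assoc, e1, e2]
    have : ρ + n ≠ 0 := by positivity
    field_simp
  intro i hi
  obtain ⟨n, rfl⟩ := Nat.exists_eq_add_of_le' hi
  have hn : (0:ℝ) ≤ n := n.cast_nonneg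
  have s1 : n + 2 - 2 = n := rfl
  have s2 : n + 2 - 1 = n + 1 := rfl
  rw [s1, s2]
  have key : a (n + 2) * a n / a (n + 1) ^ 2
      = ((n : ℝ) + 1) * (n + ρ + 1) ^ 3 / ((n + 2) * (n + ρ) ^ 2 * (n + ρ + 2)) := by
    have r1 := hrec (n + 1)
    have hp := hpos n
    rw [r1, hrec n]
    push_cast
    have : ρ + n ≠ 0 := by positivity
    have : (n:ℝ) + ρ ≠ 0 := by positivity
    have : ρ + n + 1 ≠ 0 := by positivity
    have : ρ + (n + 1) + 1 ≠ 0 := by positivity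
    have : (n:ℝ) + 1 + 1 ≠ 0 := by positivity
    have : (n:ℝ) + ρ + 2 ≠ 0 := by positivity
    field_simp
    ring
  constructor
  · rw [key]
    push_cast
    congr 1 <;> ring
  · have hp := hpos (n + 1)
    rw [← one_le_div (by positivity), key, one_le_div (by positivity)]
    have hx : (0:ℝ) ≤ n + ρ := by positivity
    have A : (n + ρ) * ((n + ρ) * (1 + ρ)) ≤ (n + ρ) * ((n + 1) * 2) := by
      gcongr
      linarith
    nlinarith [mul_nonneg hx (show (0:ℝ) ≤ n + 1 by positivity)]
end

section
/- For all reals a > 0, b ∈ (0,1), and z ∈ [0,1), the incomplete Beta function has the convergent series representation B(z;a,b) = z^a · ∑_{k=0}^∞ Γ(k+1−b)·z^k / (Γ(1−b)·(a+k)·k!). -/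
open MeasureTheory Real

theorem choose_eq_gamma (s : ℝ) (hs : 0 < s) (n : ℕ) :
    Ring.choose (s + n - 1) n = Real.Gamma (n + s) / (Real.Gamma s * Nat.factorial n) := by
  have hG := (Real.Gamma_pos_of_pos hs).ne'
  have h := Ring.factorial_nsmul_multichoose_eq_ascPochhammer s n
  rw [Ring.multichoose_eq, nsmul_eq_mul] at h
  have key : (ascPochhammer ℕ n).smeval s * Real.Gamma s = Real.Gamma (n + s) := by
    clear h
    induction n with
    | zero => simp
    | succ k ih =>
      have hk : (k : ℝ) + s ≠ 0 := by positivity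
      rw [ascPochhammer_succ_right, Polynomial.smeval_mul, Polynomial.smeval_add,
        Polynomial.smeval_X, Polynomial.smeval_natCast]
      push_cast
      rw [show (k : ℝ) + 1 + s = (k + s) + 1 by ring, Real.Gamma_add_one hk, ← ih]
      simp
      ring
  have hf : (Nat.factorial n : ℝ) ≠ 0 := by positivity
  rw [eq_div_iff (mul_ne_zero hG hf), ← key, ← h]
  ring

theorem hasSum_binom (s x : ℝ) (hs : 0 < s) (hx0 : 0 ≤ x) (hx : x < 1) :
    HasSum (fun n : ℕ => Real.Gamma (n + s) / (Real.Gamma s * Nat.factorial n) * x ^ n)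
      ((1 - x) ^ (-s)) := by
  have h := (Real.one_div_one_sub_rpow_hasFPowerSeriesOnBall_zero s).hasSum (y := x) (by
    rw [← ENNReal.ofReal_one, Metric.eball_ofReal]
    simpa [abs_of_nonneg hx0] using hx)
  rw [zero_add, one_div, ← Real.rpow_neg (by linarith)] at h
  refine h.congr_fun ?_ 
  intro n
  simp [FormalMultilinearSeries.ofScalars, choose_eq_gamma s hs n]

theorem incBeta_series (a b z : ℝ) (ha : 0 < a) (hb : b ∈ Set.Ioo (0:ℝ) 1)
    (hz : z ∈ Set.Ico (0:ℝ) 1) :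
    HasSum
      (fun k : ℕ =>
        z ^ a * (Real.Gamma (k + 1 - b) * z ^ k / (Real.Gamma (1 - b) * (a + k) * Nat.factorial k)))
      (incBeta z a b) := by
  obtain ⟨hz0, hz1⟩ := hz
  have hs : 0 < 1 - b := by linarith [hb.2]
  set c : ℕ → ℝ := fun n => Real.Gamma (n + (1 - b)) / (Real.Gamma (1 - b) * Nat.factorial n)
    with hc
  have hc0 : ∀ n, 0 ≤ c n := fun n => by
    have h1 := Real.Gamma_pos_of_pos hs
    have h2 : 0 < Real.Gamma (n + (1 - b)) := Real.Gamma_pos_of_pos (by positivity)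
    simp only [hc]
    positivity
  have hmem : ∀ t ∈ Set.uIoc 0 z, 0 < t ∧ t ≤ z := fun t ht => by
    rwa [Set.uIoc_of_le hz0] at ht
  have main := intervalIntegral.hasSum_integral_of_dominated_convergence (μ := volume)
    (a := 0) (b := z) (F := fun n t => c n * t ^ (a - 1 + n))
    (f := fun t => t ^ (a - 1) * (1 - t) ^ (b - 1))
    (fun n t => c n * z ^ n * t ^ (a - 1)) ?_ ?_ ?_ ?_ ?_
  · unfold incBeta
    refine main.congr_fun fun n => ?_
    rw [intervalIntegral.integral_const_mul, integral_rpow (Or.inl (by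
      have : (0:ℝ) ≤ n := by positivity
      linarith))]
    have h0 : (a - 1 + n + 1 : ℝ) = a + n := by ring
    have hn : (a + n : ℝ) ≠ 0 := by positivity
    rw [h0, Real.zero_rpow hn, Real.rpow_add_of_nonneg hz0 ha.le (by positivity),
      Real.rpow_natCast]
    simp only [hc]
    have h1 := (Real.Gamma_pos_of_pos hs).ne'
    rw [show (n + 1 - b : ℝ) = n + (1 - b) by ring]
    field_simp
    ring
  · intro n
    exact (by fun_prop : Measurable fun t : ℝ => c n * t ^ (a - 1 + n)).aestronglyMeasurable
  · intro n
    refine .of_forall fun t ht => ?_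
    obtain ⟨h1, h2⟩ := hmem t ht
    rw [Real.norm_of_nonneg (mul_nonneg (hc0 n) (by positivity)), Real.rpow_add h1,
      Real.rpow_natCast, mul_assoc, mul_comm (z ^ n)]
    have := hc0 n
    gcongr
  · exact .of_forall fun t ht => (hasSum_binom _ z hs hz0 hz1).summable.mul_right _
  · simp_rw [tsum_mul_right]
    exact (intervalIntegral.intervalIntegrable_rpow' (r := a - 1) (by linarith)).const_mul _
  · refine .of_forall fun t ht => ?_
    obtain ⟨h1, h2⟩ := hmem t ht
    have := (hasSum_binom _ t hs h1.le (by linarith)).mul_left (t ^ (a - 1))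
    rw [neg_sub] at this
    refine this.congr_fun fun n => ?_
    rw [Real.rpow_add h1, Real.rpow_natCast]
    ring
end

section
/- Let α : ℕ × ℕ → ℝ be nonnegative and monotone nonincreasing in each coordinate, and let κ₁, κ₂ : ℕ → ℝ be nonnegative with ∑_{j=0}^∞ κ₁(j) = 1 and ∑_{j=0}^∞ κ₂(j) = 1. Then for any k₁, k₂ ∈ ℕ, the double series S = ∑_{j₁,j₂ ≥ 0} α(j₁,j₂)·κ₁(j₁)·κ₂(j₂) converges and satisfies S ≤ ∑_{j₁<k₁, j₂<k₂} (α(j₁,j₂) − α(j₁,k₂) − α(k₁,j₂) + α(k₁,k₂))·κ₁(j₁)·κ₂(j₂) + ∑_{j₁<k₁} (α(j₁,k₂) − α(k₁,k₂))·κ₁(j₁) + ∑_{j₂<k₂} (α(k₁,j₂) − α(k₁,k₂))·κ₂(j₂) + α(k₁,k₂). -/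
theorem truncated_double_sum_bound (α : ℕ × ℕ → ℝ)
    (hα0 : ∀ p : ℕ × ℕ, 0 ≤ α p)
    (hmono1 : ∀ j₁ j₁' j₂ : ℕ, j₁ ≤ j₁' → α (j₁', j₂) ≤ α (j₁, j₂))
    (hmono2 : ∀ j₁ j₂ j₂' : ℕ, j₂ ≤ j₂' → α (j₁, j₂') ≤ α (j₁, j₂))
    (κ₁ κ₂ : ℕ → ℝ) (hκ₁0 : ∀ j, 0 ≤ κ₁ j) (hκ₂0 : ∀ j, 0 ≤ κ₂ j)
    (hκ₁ : HasSum κ₁ 1) (hκ₂ : HasSum κ₂ 1) (k₁ k₂ : ℕ) :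
    Summable (fun p : ℕ × ℕ => α p * κ₁ p.1 * κ₂ p.2) ∧
    ∑' p : ℕ × ℕ, α p * κ₁ p.1 * κ₂ p.2 ≤
      (∑ j₁ ∈ Finset.range k₁, ∑ j₂ ∈ Finset.range k₂,
        (α (j₁, j₂) - α (j₁, k₂) - α (k₁, j₂) + α (k₁, k₂)) * κ₁ j₁ * κ₂ j₂)
      + (∑ j₁ ∈ Finset.range k₁, (α (j₁, k₂) - α (k₁, k₂)) * κ₁ j₁)
      + (∑ j₂ ∈ Finset.range k₂, (α (k₁, j₂) - α (k₁, k₂)) * κ₂ j₂)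
      + α (k₁, k₂) := by
  have hA : HasSum (fun p : ℕ × ℕ => if p.1 < k₁ ∧ p.2 < k₂ then
      (α (p.1, p.2) - α (p.1, k₂) - α (k₁, p.2) + α (k₁, k₂)) * κ₁ p.1 * κ₂ p.2 else 0)
      (∑ j₁ ∈ Finset.range k₁, ∑ j₂ ∈ Finset.range k₂,
        (α (j₁, j₂) - α (j₁, k₂) - α (k₁, j₂) + α (k₁, k₂)) * κ₁ j₁ * κ₂ j₂) := by
    rw [← Finset.sum_product']
    have h := hasSum_sum_of_ne_finset_zero (L := SummationFilter.unconditional _)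
      (s := Finset.range k₁ ×ˢ Finset.range k₂)
      (f := fun p : ℕ × ℕ => if p.1 < k₁ ∧ p.2 < k₂ then
      (α (p.1, p.2) - α (p.1, k₂) - α (k₁, p.2) + α (k₁, k₂)) * κ₁ p.1 * κ₂ p.2 else 0)
      (by
        intro b hb
        have : ¬ (b.1 < k₁ ∧ b.2 < k₂) := by simpa using hb
        exact if_neg this)
    convert h using 1
    apply Finset.sum_congr rfl
    intro p hp
    have : p.1 < k₁ ∧ p.2 < k₂ := by simpa using hp
    rw [if_pos this]
  have key : ∀ (k : ℕ) (g : ℕ → ℝ), HasSum (fun j => if j < k then g j else 0)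
      (∑ j ∈ Finset.range k, g j) := by
    intro k g
    have h := hasSum_sum_of_ne_finset_zero (L := SummationFilter.unconditional _)
      (s := Finset.range k)
      (f := fun j => if j < k then g j else 0)
      (by
        intro b hb
        have : ¬ (b < k) := by simpa using hb
        exact if_neg this)
    convert h using 1
    apply Finset.sum_congr rfl
    intro p hp
    rw [if_pos (by simpa using hp)]
  have hmul : ∀ (f g : ℕ → ℝ) (s t : ℝ), (∀ j, 0 ≤ f j) → (∀ j, 0 ≤ g j) → HasSum f s →
      HasSum g t → HasSum (fun p : ℕ × ℕ => f p.1 * g p.2) (s * t) := by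
    intro f g s t hf hg hs ht
    exact hs.mul ht (hs.summable.mul_of_nonneg ht.summable hf hg)
  have hB := hmul _ _ _ _ (by
    intro j
    show (0:ℝ) ≤ if j < k₁ then (α (j, k₂) - α (k₁, k₂)) * κ₁ j else 0
    split_ifs with h
    · exact mul_nonneg (sub_nonneg.2 (hmono1 _ _ _ h.le)) (hκ₁0 j)
    · exact le_rfl) hκ₂0 (key k₁ fun j => (α (j, k₂) - α (k₁, k₂)) * κ₁ j) hκ₂
  have hC := hmul _ _ _ _ hκ₁0 (by
    intro j
    show (0:ℝ) ≤ if j < k₂ then (α (k₁, j) - α (k₁, k₂)) * κ₂ j else 0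
    split_ifs with h
    · exact mul_nonneg (sub_nonneg.2 (hmono2 _ _ _ h.le)) (hκ₂0 j)
    · exact le_rfl) hκ₁ (key k₂ fun j => (α (k₁, j) - α (k₁, k₂)) * κ₂ j)
  have hD := (hmul _ _ _ _ hκ₁0 hκ₂0 hκ₁ hκ₂).mul_left (α (k₁, k₂))
  have hT := ((hA.add hB).add hC).add hD
  simp only [mul_one, one_mul] at hT
  have h0 : ∀ p : ℕ × ℕ, 0 ≤ α p * κ₁ p.1 * κ₂ p.2 := fun p =>
    mul_nonneg (mul_nonneg (hα0 p) (hκ₁0 _)) (hκ₂0 _)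
  have hS : Summable (fun p : ℕ × ℕ => α p * κ₁ p.1 * κ₂ p.2) := by
    refine Summable.of_nonneg_of_le h0 ?_
      ((hmul _ _ _ _ hκ₁0 hκ₂0 hκ₁ hκ₂).mul_left (α (0, 0))).summable
    rintro ⟨a, b⟩
    have h1 : α (a, b) ≤ α (0, 0) :=
      (hmono1 0 a b (Nat.zero_le _)).trans (hmono2 0 0 b (Nat.zero_le _))
    have := mul_le_mul_of_nonneg_right h1 (mul_nonneg (hκ₁0 a) (hκ₂0 b))
    simpa [mul_assoc] using this
  refine ⟨hS, hasSum_le ?_ hS.hasSum hT⟩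
  rintro ⟨a, b⟩
  have hk := mul_nonneg (hκ₁0 a) (hκ₂0 b)
  dsimp only
  by_cases ha : a < k₁ <;> by_cases hb : b < k₂
  · simp only [ha, hb, and_self, if_true]
    apply le_of_eq
    ring
  · have h1 := mul_le_mul_of_nonneg_right (hmono2 a k₂ b (not_lt.1 hb)) hk
    simp only [ha, hb, and_false, if_true, if_false]
    linarith
  · have h1 := mul_le_mul_of_nonneg_right (hmono1 k₁ a b (not_lt.1 ha)) hk
    simp only [ha, hb, false_and, if_true, if_false]
    linarith
  · have h1 := mul_le_mul_of_nonneg_right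
      ((hmono1 k₁ a b (not_lt.1 ha)).trans (hmono2 k₁ k₂ b (not_lt.1 hb))) hk
    simp only [ha, hb, and_self, if_false]
    linarith
end

section
/- Define F : [0,1] → ℝ by F(t) = 0.68145/√(1 − 0.53562·t). Then: (a) F is nonnegative, monotone increasing, and convex on [0,1]; (b) ∫₀¹ F(t) dt ≤ 1/1.2337; and (c) F(1) ≤ 1. -/
noncomputable def F (t : ℝ) : ℝ := 0.68145 / Real.sqrt (1 - 0.53562 * t)

theorem F_properties :
    (∀ t ∈ Set.Icc (0:ℝ) 1, 0 ≤ F t) ∧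
    StrictMonoOn F (Set.Icc (0:ℝ) 1) ∧
    ConvexOn ℝ (Set.Icc (0:ℝ) 1) F ∧
    (∫ t in (0:ℝ)..1, F t) ≤ 1 / 1.2337 ∧
    F 1 ≤ 1 := by
  have hpos : ∀ t ∈ Set.Icc (0:ℝ) 1, 0 < 1 - 0.53562 * t := by
    intro t ht
    have := ht.2
    norm_num at *
    linarith
  refine ⟨?_, ?_, ?_, ?_, ?_⟩
  · intro t _
    unfold F
    positivity
  · intro x hx y hy hxy
    unfold F
    have hy' := hpos y hy
    apply div_lt_div_of_pos_left (by norm_num) (Real.sqrt_pos.2 hy')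
    apply Real.sqrt_lt_sqrt hy'.le
    norm_num
    linarith
  · refine ⟨convex_Icc 0 1, ?_⟩
    intro x hx y hy a b ha hb hab
    have hx' := hpos x hx
    have hy' := hpos y hy
    have hc := Real.strictConcaveOn_sqrt.concaveOn.2 (Set.mem_Ici.2 hx'.le)
      (Set.mem_Ici.2 hy'.le) ha hb hab
    have hi := (convexOn_zpow (𝕜 := ℝ) (-1)).2 (Set.mem_Ioi.2 (Real.sqrt_pos.2 hx'))
      (Set.mem_Ioi.2 (Real.sqrt_pos.2 hy')) ha hb hab
    have hp := (convex_Ioi (𝕜 := ℝ) (0:ℝ)) (Set.mem_Ioi.2 (Real.sqrt_pos.2 hx'))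
      (Set.mem_Ioi.2 (Real.sqrt_pos.2 hy')) ha hb hab
    have he : 1 - 0.53562 * (a • x + b • y)
        = a • (1 - 0.53562 * x) + b • (1 - 0.53562 * y) := by
      simp only [smul_eq_mul]
      linear_combination -hab
    unfold F
    rw [he]
    have hinv := inv_anti₀ (Set.mem_Ioi.1 hp) hc
    simp only [zpow_neg_one] at hi
    have h := mul_le_mul_of_nonneg_left (hinv.trans hi) (by norm_num : (0:ℝ) ≤ 0.68145)
    simp only [smul_eq_mul, div_eq_mul_inv] at h ⊢
    refine h.trans (le_of_eq ?_)
    ring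
  · have hI : (∫ t in (0:ℝ)..1, F t)
        = (-(2 * 0.68145 / 0.53562) * Real.sqrt (1 - 0.53562 * 1))
          - (-(2 * 0.68145 / 0.53562) * Real.sqrt (1 - 0.53562 * 0)) := by
      apply intervalIntegral.integral_eq_sub_of_hasDerivAt
        (f := fun t : ℝ => -(2 * 0.68145 / 0.53562) * Real.sqrt (1 - 0.53562 * t))
      · intro t ht
        rw [Set.uIcc_of_le zero_le_one] at ht
        have h := hpos t ht
        have h1 : HasDerivAt (fun t : ℝ => 1 - 0.53562 * t) (-(0.53562 * 1)) t :=
          ((hasDerivAt_id t).const_mul 0.53562).const_sub 1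
        have h2 := (h1.sqrt h.ne').const_mul (-(2 * 0.68145 / 0.53562))
        refine h2.congr_deriv ?_
        unfold F
        have := (Real.sqrt_pos.2 h).ne'
        generalize Real.sqrt (1 - 0.53562 * t) = s at *
        field_simp
      · apply ContinuousOn.intervalIntegrable
        rw [Set.uIcc_of_le zero_le_one]
        unfold F
        apply ContinuousOn.div (by fun_prop) (by fun_prop)
        intro t ht
        exact (Real.sqrt_pos.2 (hpos t ht)).ne'
    have hs : (0.68145:ℝ) ≤ Real.sqrt (1 - 0.53562 * 1) := by
      apply Real.le_sqrt_of_sq_le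
      norm_num
    rw [hI, mul_zero, sub_zero, Real.sqrt_one]
    generalize Real.sqrt (1 - 0.53562 * 1) = s at *
    norm_num at *
    linarith
  · unfold F
    have hs : (0.68145:ℝ) ≤ Real.sqrt (1 - 0.53562 * 1) := by
      apply Real.le_sqrt_of_sq_le
      norm_num
    exact div_le_one_of_le₀ hs (Real.sqrt_nonneg _)
end

section
/- Define F : [0,1] → ℝ by F(t) = 0.68145/√(1 − 0.53562·t). Then for every r ∈ [0,1], F(r)·(1 − 0.3947·∫₀^r F(t) dt) ≥ 0.68. -/
theorem F_attenuation_bound :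
    ∀ r ∈ Set.Icc (0:ℝ) 1, 0.68 ≤ F r * (1 - 0.3947 * ∫ t in (0:ℝ)..r, F t) := by
  intro r hr
  obtain ⟨h0, h1⟩ := hr
  have hpos : ∀ t ∈ Set.uIcc (0:ℝ) r, 0 < 1 - 0.53562 * t := by
    intro t ht
    rw [Set.uIcc_of_le h0] at ht
    have := ht.2
    norm_num at *
    linarith
  have hd : ∀ t ∈ Set.uIcc (0:ℝ) r,
      HasDerivAt (fun t : ℝ => -(2 * 0.68145 / 0.53562) * Real.sqrt (1 - 0.53562 * t)) (F t) t := by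
    intro t ht
    have hp := hpos t ht
    have hs : 0 < Real.sqrt (1 - 0.53562 * t) := Real.sqrt_pos.mpr hp
    have h2 : HasDerivAt (fun t : ℝ => 1 - 0.53562 * t) (-(0.53562 * 1)) t :=
      ((hasDerivAt_id t).const_mul (0.53562:ℝ)).const_sub 1
    have h3 := (h2.sqrt hp.ne').const_mul (-(2 * 0.68145 / 0.53562) : ℝ)
    refine h3.congr_deriv ?_
    unfold F
    generalize Real.sqrt (1 - 0.53562 * t) = s at hs ⊢
    field_simp
  have hc : ContinuousOn F (Set.uIcc (0:ℝ) r) := by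
    unfold F
    refine ContinuousOn.div (by fun_prop) (by fun_prop) ?_
    intro t ht
    exact (Real.sqrt_pos.mpr (hpos t ht)).ne'
  rw [intervalIntegral.integral_eq_sub_of_hasDerivAt hd hc.intervalIntegrable]
  have hp := hpos r Set.right_mem_uIcc
  have hs : (0.6814:ℝ) ≤ Real.sqrt (1 - 0.53562 * r) := by
    apply Real.le_sqrt_of_sq_le
    norm_num at *
    linarith
  unfold F
  rw [mul_zero, sub_zero, Real.sqrt_one]
  generalize Real.sqrt (1 - 0.53562 * r) = s at hs ⊢
  have hs0 : 0 < s := by norm_num at *; linarith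
  rw [div_mul_eq_mul_div, le_div_iff₀ hs0]
  norm_num at *
  linarith
end

section
/- Define F : [0,1] → ℝ by F(t) = 0.68145/√(1 − 0.53562·t). Then for all reals r ≥ 0 and g ≥ 0 with r + g ≤ 1, the quantity x = (1 − 0.7)·g·F(r) + 0.7·∫_r^{r+g} F(t) dt satisfies 0 ≤ x ≤ g. -/
theorem F_nonneg_aux (t : ℝ) : 0 ≤ F t := by
  unfold F; positivity

theorem F_le_one_aux (t : ℝ) (ht : t ≤ 1) : F t ≤ 1 := by
  unfold F
  have h : (0.68145 : ℝ) ≤ Real.sqrt (1 - 0.53562 * t) := by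
    apply Real.le_sqrt_of_sq_le
    norm_num
    linarith
  exact div_le_one_of_le₀ h (Real.sqrt_nonneg _)

theorem x_between_zero_and_g (r g : ℝ) (hr : 0 ≤ r) (hg : 0 ≤ g) (hrg : r + g ≤ 1) :
    0 ≤ (1 - 0.7) * g * F r + 0.7 * ∫ t in r..(r + g), F t ∧
    (1 - 0.7) * g * F r + 0.7 * (∫ t in r..(r + g), F t) ≤ g := by
  have h1 : 0 ≤ ∫ t in r..(r + g), F t :=
    intervalIntegral.integral_nonneg (by linarith) (fun t _ => F_nonneg_aux t)
  have h2 : ‖∫ t in r..(r + g), F t‖ ≤ 1 * |r + g - r| := by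
    apply intervalIntegral.norm_integral_le_of_norm_le_const
    intro t ht
    rw [Set.uIoc_of_le (by linarith)] at ht
    rw [Real.norm_eq_abs, abs_of_nonneg (F_nonneg_aux t)]
    exact F_le_one_aux t (ht.2.trans hrg)
  rw [Real.norm_eq_abs, abs_of_nonneg h1, add_sub_cancel_left, abs_of_nonneg hg] at h2
  have h3 := mul_nonneg hg (F_nonneg_aux r)
  have h4 := mul_le_mul_of_nonneg_left (F_le_one_aux r (by linarith)) hg
  constructor <;> norm_num <;> linarith
end

section
/- The function r ↦ (1 − binom(2/r, 1/r)⁻¹)·r is monotone nondecreasing on (0,1], where binom denotes the generalized binomial coefficient; i.e., r ↦ r·(1 − Γ(1/r + 1)²/Γ(2/r + 1)) is nondecreasing for r ∈ (0,1]. -/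
open MeasureTheory Set in
/-- The Beta integral in real form. -/
theorem beta_real_aux (x : ℝ) (hx : 0 < x) :
    Real.Gamma x * Real.Gamma x / Real.Gamma (x + x)
      = ∫ t in (0:ℝ)..1, (t * (1 - t)) ^ (x - 1) := by
  have h := ProbabilityTheory.beta_eq_betaIntegralReal x x hx hx
  rw [ProbabilityTheory.beta] at h
  rw [h, Complex.betaIntegral]
  have : (∫ t in (0:ℝ)..1, ((t:ℂ)) ^ ((x:ℂ) - 1) * (1 - (t:ℂ)) ^ ((x:ℂ) - 1))
      = ∫ t in (0:ℝ)..1, (((t * (1 - t)) ^ (x - 1) : ℝ) : ℂ) := by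
    apply intervalIntegral.integral_congr
    intro t ht
    rw [Set.uIcc_of_le zero_le_one] at ht
    have h1 : 0 ≤ 1 - t := by linarith [ht.2]
    simp only
    rw [Real.mul_rpow ht.1 h1]
    push_cast
    rw [Complex.ofReal_cpow ht.1, Complex.ofReal_cpow h1]
    push_cast
    rfl
  rw [this, intervalIntegral.integral_ofReal, Complex.ofReal_re]

theorem chord_aux (d u v : ℝ) (hd : 0 ≤ d) (hu : 0 < u) (huv : u ≤ v) (hv : v ≤ 1) :
    (1 - u ^ d) * (-Real.log v) ≤ (1 - v ^ d) * (-Real.log u) := by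
  have hv0 : 0 < v := hu.trans_le huv
  rcases eq_or_lt_of_le (huv.trans hv) with h1 | h1
  · have : v = 1 := le_antisymm hv (h1 ▸ huv)
    subst this; subst h1; simp
  have hlu : Real.log u < 0 := Real.log_neg hu h1
  have hlv : Real.log v ≤ 0 := Real.log_nonpos hv0.le hv
  have hluv : Real.log u ≤ Real.log v := Real.log_le_log hu huv
  set p := Real.log v / Real.log u with hp
  have hp0 : 0 ≤ p := div_nonneg_of_nonpos hlv hlu.le
  have hp1 : p ≤ 1 := by
    rw [hp, div_le_one_of_neg hlu]; exact hluv
  have hpe : p * Real.log u = Real.log v := div_mul_cancel₀ _ hlu.ne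
  have hc := convexOn_exp.2 (Set.mem_univ (d * Real.log u)) (Set.mem_univ (0:ℝ)) hp0
    (by linarith : 0 ≤ 1 - p) (by ring)
  simp only [smul_eq_mul, mul_zero, add_zero, Real.exp_zero, mul_one] at hc
  have e1 : p * (d * Real.log u) = Real.log v * d := by rw [← hpe]; ring
  rw [e1, ← Real.rpow_def_of_pos hv0, mul_comm d, ← Real.rpow_def_of_pos hu] at hc
  rw [← hpe]
  nlinarith

theorem ratio_aux (x y u v : ℝ) (hx : 1 ≤ x) (hxy : x ≤ y) (hu : 0 < u) (huv : u ≤ v)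
    (hv : v ≤ 1) :
    (u ^ (x - 1) - u ^ (y - 1)) * (-Real.log v) ≤ (v ^ (x - 1) - v ^ (y - 1)) * (-Real.log u) := by
  have hv0 : 0 < v := hu.trans_le huv
  have h := chord_aux (y - x) u v (by linarith) hu huv hv
  have e : ∀ w : ℝ, 0 < w → w ^ (y - 1) = w ^ (x - 1) * w ^ (y - x) := by
    intro w hw
    rw [← Real.rpow_add hw]; congr 1; ring
  rw [e u hu, e v hv0]
  have h1 : u ^ (x - 1) ≤ v ^ (x - 1) := Real.rpow_le_rpow hu.le huv (by linarith)
  have h2 : 0 ≤ u ^ (x - 1) := by positivity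
  have h3 : v ^ (y - x) ≤ 1 := Real.rpow_le_one hv0.le hv (by linarith)
  have h4 : Real.log u ≤ 0 := Real.log_nonpos hu.le (huv.trans hv)
  calc _ = u ^ (x - 1) * ((1 - u ^ (y - x)) * (-Real.log v)) := by ring
    _ ≤ u ^ (x - 1) * ((1 - v ^ (y - x)) * (-Real.log u)) := by gcongr
    _ ≤ v ^ (x - 1) * ((1 - v ^ (y - x)) * (-Real.log u)) := by
        apply mul_le_mul_of_nonneg_right h1
        exact mul_nonneg (by linarith) (by linarith)
    _ = _ := by ring

open MeasureTheory Set in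
theorem key_aux (x y : ℝ) (hx : 1 ≤ x) (hxy : x ≤ y) :
    1 / y - (∫ t in (0:ℝ)..1, (t * (1 - t)) ^ (y - 1)) / 2
      ≤ 1 / x - (∫ t in (0:ℝ)..1, (t * (1 - t)) ^ (x - 1)) / 2 := by
  have hy : 1 ≤ y := hx.trans hxy
  have hx0 : x ≠ 0 := by positivity
  have hy0 : y ≠ 0 := by positivity
  have hl4 : Real.log (1 / 4) < 0 := Real.log_neg (by norm_num) (by norm_num)
  obtain ⟨C, hC⟩ : ∃ C : ℝ, C * (-Real.log (1 / 4)) =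
      (1 / 4 : ℝ) ^ (x - 1) - (1 / 4 : ℝ) ^ (y - 1) :=
    ⟨((1 / 4 : ℝ) ^ (x - 1) - (1 / 4 : ℝ) ^ (y - 1)) / (-Real.log (1 / 4)), by
      field_simp⟩
  set l : ℝ → ℝ := fun u => u ^ (x - 1) - u ^ (y - 1) + C * Real.log u with hl
  have hneg : ∀ u, 0 < u → u ≤ 1 / 4 → l u ≤ 0 := by
    intro u hu hu4
    have := ratio_aux x y u (1 / 4) hx hxy hu hu4 (by norm_num)
    rw [← hC] at this
    simp only [hl]
    nlinarith
  have hpos : ∀ u, 1 / 4 ≤ u → u ≤ 1 → 0 ≤ l u := by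
    intro u hu4 hu
    have := ratio_aux x y (1 / 4) u hx hxy (by norm_num) hu4 hu
    rw [← hC] at this
    simp only [hl]
    nlinarith
  set L : ℝ → ℝ := fun u => u ^ x / x - u ^ y / y + C * (u * Real.log u - u) with hL
  have hLcont : Continuous L := by
    have h1 : Continuous fun u : ℝ => u ^ x := Real.continuous_rpow_const (by linarith)
    have h2 : Continuous fun u : ℝ => u ^ y := Real.continuous_rpow_const (by linarith)
    have h3 := Real.continuous_mul_log
    fun_prop
  have hLd : ∀ u, 0 < u → HasDerivAt L (l u) u := by
    intro u hu
    have h1 := (Real.hasDerivAt_rpow_const (x := u) (p := x) (Or.inl hu.ne')).div_const x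
    have h2 := (Real.hasDerivAt_rpow_const (x := u) (p := y) (Or.inl hu.ne')).div_const y
    have h3 := ((Real.hasDerivAt_mul_log hu.ne').sub (hasDerivAt_id u)).const_mul C
    convert! (h1.sub h2).add h3 using 1
    simp only [hl]
    field_simp
    ring
  have hmono : L (1 / 4) ≤ L 1 := by
    have : MonotoneOn L (Icc (1 / 4) 1) := by
      apply monotoneOn_of_deriv_nonneg (convex_Icc _ _) hLcont.continuousOn
      · intro u hu
        rw [interior_Icc] at hu
        exact (hLd u (by linarith [hu.1])).differentiableAt.differentiableWithinAt
      · intro u hu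
        rw [interior_Icc] at hu
        rw [(hLd u (by linarith [hu.1])).deriv]
        exact hpos u hu.1.le hu.2.le
    exact this (by norm_num) (by norm_num) (by norm_num)
  have hcx : Continuous fun t : ℝ => (t * (1 - t)) ^ (x - 1) :=
    (Real.continuous_rpow_const (by linarith)).comp (by fun_prop)
  have hcy : Continuous fun t : ℝ => (t * (1 - t)) ^ (y - 1) :=
    (Real.continuous_rpow_const (by linarith)).comp (by fun_prop)
  have hlog1 : ∀ a b : ℝ, IntervalIntegrable (fun t : ℝ => Real.log (1 - t)) volume a b := by
    intro a b
    have := (intervalIntegral.intervalIntegrable_log' (a := 1 - a) (b := 1 - b)).comp_sub_left 1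
    simpa using this
  have hlogi : ∀ a b : ℝ, IntervalIntegrable (fun t : ℝ => Real.log t + Real.log (1 - t))
      volume a b := fun a b => intervalIntegral.intervalIntegrable_log'.add (hlog1 a b)
  set φ : ℝ → ℝ := fun t => ((t * (1 - t)) ^ (x - 1) - (t * (1 - t)) ^ (y - 1)) +
    C * (Real.log t + Real.log (1 - t)) with hφ
  have hφi : ∀ a b : ℝ, IntervalIntegrable φ volume a b := fun a b =>
    ((hcx.intervalIntegrable a b).sub (hcy.intervalIntegrable a b)).add ((hlogi a b).const_mul C)
  have hhalf : (∫ t in (0:ℝ)..(1 / 2), φ t) ≤ L (1 / 4) - L 0 := by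
    have := intervalIntegral.integral_le_sub_of_hasDeriv_right_of_le (a := 0) (b := 1 / 2)
      (g := fun t => L (t * (1 - t))) (g' := fun t => l (t * (1 - t)) * (1 - 2 * t)) (φ := φ)
      (by norm_num) (by fun_prop) ?_ ?_ ?_
    · norm_num at this ⊢
      exact this
    · intro t ht
      have hp : 0 < t * (1 - t) := mul_pos ht.1 (by linarith [ht.2])
      have hd : HasDerivAt (fun t : ℝ => t * (1 - t)) (1 - 2 * t) t := by
        have := (hasDerivAt_id t).mul ((hasDerivAt_id t).const_sub 1)
        convert! this using 1
        simp; ring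
      exact ((hLd _ hp).comp t hd).hasDerivWithinAt
    · rw [integrableOn_Icc_iff_integrableOn_Ioc]
      exact (intervalIntegrable_iff_integrableOn_Ioc_of_le (by norm_num)).1 (hφi _ _)
    · intro t ht
      have ht1 : 0 < 1 - t := by linarith [ht.2]
      have hp : 0 < t * (1 - t) := mul_pos ht.1 ht1
      have e : φ t = l (t * (1 - t)) := by
        simp only [hφ, hl]
        rw [Real.log_mul ht.1.ne' ht1.ne']
      rw [e]
      have := hneg _ hp (by nlinarith [sq_nonneg (1 - 2 * t)])
      nlinarith [ht.1]
  have hsymm : (∫ t in (1 / 2 : ℝ)..1, φ t) = ∫ t in (0:ℝ)..(1 / 2), φ t := by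
    have h := intervalIntegral.integral_comp_sub_left (a := 0) (b := 1 / 2) φ 1
    have e : (fun t => φ (1 - t)) = φ := by
      funext t
      simp only [hφ]
      rw [show 1 - (1 - t) = t by ring, mul_comm (1 - t) t, add_comm (Real.log (1 - t))]
    rw [e] at h
    rw [h]
    norm_num
  have hfull : (∫ t in (0:ℝ)..1, φ t) = 2 * ∫ t in (0:ℝ)..(1 / 2), φ t := by
    rw [← intervalIntegral.integral_add_adjacent_intervals (hφi 0 (1 / 2)) (hφi (1 / 2) 1), hsymm]
    ring
  have hlogI : (∫ t in (0:ℝ)..1, (Real.log t + Real.log (1 - t))) = -2 := by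
    rw [intervalIntegral.integral_add intervalIntegral.intervalIntegrable_log' (hlog1 0 1),
      intervalIntegral.integral_comp_sub_left (fun t => Real.log t) 1]
    simp [integral_log]
    norm_num
  have hval : (∫ t in (0:ℝ)..1, φ t) = (∫ t in (0:ℝ)..1, (t * (1 - t)) ^ (x - 1))
      - (∫ t in (0:ℝ)..1, (t * (1 - t)) ^ (y - 1)) + C * (-2) := by
    simp only [hφ]
    rw [intervalIntegral.integral_add
      ((hcx.intervalIntegrable 0 1).sub (hcy.intervalIntegrable 0 1)) ((hlogi 0 1).const_mul C),
      intervalIntegral.integral_sub (hcx.intervalIntegrable 0 1) (hcy.intervalIntegrable 0 1),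
      intervalIntegral.integral_const_mul, hlogI]
  have hL0 : L 0 = 0 := by simp [hL, Real.zero_rpow hx0, Real.zero_rpow hy0]
  have hL1 : L 1 = 1 / x - 1 / y - C := by simp [hL]; ring
  linarith

theorem rewrite_aux (r : ℝ) (hr : 0 < r) :
    (1 - (genBinom (2 / r) (1 / r))⁻¹) * r
      = 1 / (1 / r) - (∫ t in (0:ℝ)..1, (t * (1 - t)) ^ (1 / r - 1)) / 2 := by
  have hx : 0 < 1 / r := by positivity
  rw [← beta_real_aux _ hx, genBinom]
  have e1 : 2 / r = 1 / r + 1 / r := by ring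
  rw [e1, add_sub_cancel_right, Real.Gamma_add_one hx.ne',
    Real.Gamma_add_one (by positivity : 1 / r + 1 / r ≠ 0)]
  have h1 := (Real.Gamma_pos_of_pos hx).ne'
  have h2 := (Real.Gamma_pos_of_pos (by positivity : 0 < 1 / r + 1 / r)).ne'
  generalize Real.Gamma (1 / r + 1 / r) = A at *
  generalize Real.Gamma (1 / r) = B at *
  field_simp
  ring

theorem central_binom_factor_monotone :
    MonotoneOn (fun r : ℝ => (1 - (genBinom (2 / r) (1 / r))⁻¹) * r) (Set.Ioc 0 1) := by
  intro r hr s hs hrs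
  simp only
  rw [rewrite_aux r hr.1, rewrite_aux s hs.1]
  exact key_aux (1 / s) (1 / r) (by rw [le_div_iff₀ hs.1]; linarith [hs.2])
    (one_div_le_one_div_of_le hr.1 hrs)
end
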